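/- arXiv:1505.02372 — 2 statements merged into one kernel-verified Lean document; each statement's English description precedes it below -/
import Mathlib

section
/- Let ψ be any growing function and let φ be any growing function satisfying φ(n) ≤ n/(log₂ n + log₂ ψ(n)) for all sufficiently large n. Then there exists a sequence q₀(n) with q₀(n) ~ n·2^{n−⌈n/φ(n)⌉} such that W(n, q₀(n)) ≲ W^C·2^n + W^T·n·2^{n−⌈n/φ(n)⌉} as n → ∞. -/
open Filter

namespace Rev

/-- A reversible gate `TOF(I; t)` on `N` lines: a control set `I` with `|I| ≤ 2`
and a target `t ∉ I`.  `|I| = 0, 1, 2` correspond to NOT, CNOT, C²NOT. -/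
structure Gate (N : ℕ) where
  I : Finset (Fin N)
  t : Fin N
  card_le : I.card ≤ 2
  t_not_mem : t ∉ I

/-- The transformation computed by a gate: the target coordinate is XORed with the
conjunction of the control coordinates (the empty conjunction is `1`). -/
def Gate.apply {N : ℕ} (g : Gate N) (x : Fin N → Bool) : Fin N → Bool :=
  fun j => if j = g.t then xor (x g.t) (decide (∀ i ∈ g.I, x i = true)) else x j

/-- A reversible circuit: a finite sequence (composition) of gates. -/
abbrev Circuit (N : ℕ) := List (Gate N)

/-- The transformation computed by a circuit (composition of the gate maps). -/
def Circuit.eval {N : ℕ} (S : Circuit N) (x : Fin N → Bool) : Fin N → Bool :=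
  S.foldl (fun v g => g.apply v) x

/-- Gate complexity: the number of gates. -/
def Circuit.L {N : ℕ} (S : Circuit N) : ℕ := S.length

/-- The number of NOT and CNOT gates. -/
def Circuit.LC {N : ℕ} (S : Circuit N) : ℕ := (S.filter fun g => g.I.card ≤ 1).length

/-- The number of C²NOT (Toffoli) gates. -/
def Circuit.LT {N : ℕ} (S : Circuit N) : ℕ := (S.filter fun g => g.I.card = 2).length

/-- The quantum weight, given weights `WC` for NOT/CNOT gates and `WT` for C²NOT gates. -/
noncomputable def Circuit.W {N : ℕ} (WC WT : ℝ) (S : Circuit N) : ℝ :=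
  WC * S.LC + WT * S.LT

/-- A circuit has depth one if the sets `{t} ∪ I` of its gates are pairwise disjoint. -/
def DepthOne {N : ℕ} (S : Circuit N) : Prop :=
  S.Pairwise fun g₁ g₂ => Disjoint (insert g₁.t g₁.I) (insert g₂.t g₂.I)

/-- The depth of a circuit: the minimal number of depth-one sub-circuits whose
concatenation is the circuit. -/
noncomputable def Circuit.D {N : ℕ} (S : Circuit N) : ℕ :=
  sInf {d | ∃ parts : List (Circuit N),
    parts.length = d ∧ parts.flatten = S ∧ ∀ p ∈ parts, DepthOne p}

/-- Padding an input vector with zero values on `q` additional inputs. -/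
def pad {n q : ℕ} (x : Fin n → Bool) : Fin (n + q) → Bool :=
  fun i => if h : (i : ℕ) < n then x ⟨i, h⟩ else false

/-- A circuit `S` with `n + q` inputs implements `f : 𝔹ⁿ → 𝔹ᵐ` with `q` additional
inputs: there is a permutation `π` of the output positions such that for every `x`,
applying `S` to `⟨x, 0, …, 0⟩` and permuting the coordinates by `π` yields a vector
whose first `m` coordinates equal `f x`. -/
def Implements {n q m : ℕ} (S : Circuit (n + q)) (f : (Fin n → Bool) → Fin m → Bool) :
    Prop :=
  m ≤ n + q ∧ ∃ π : Equiv.Perm (Fin (n + q)), ∀ x : Fin n → Bool, ∀ j : Fin m,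
    ∀ hj : (j : ℕ) < n + q, Circuit.eval S (pad x) (π ⟨j, hj⟩) = f x j

/-- `f ∈ F(n, q)`: `f : 𝔹ⁿ → 𝔹ⁿ` is implementable with `q` additional inputs. -/
def Implementable (n q : ℕ) (f : (Fin n → Bool) → Fin n → Bool) : Prop :=
  ∃ S : Circuit (n + q), Implements S f

/-- `L(f, q)`: minimal gate complexity of a circuit implementing `f` with `q`
additional inputs. -/
noncomputable def Lmin (n q : ℕ) (f : (Fin n → Bool) → Fin n → Bool) : ℕ :=
  sInf {l | ∃ S : Circuit (n + q), Implements S f ∧ S.L = l}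

/-- The Shannon gate complexity function `L(n, q)`. -/
noncomputable def Lsh (n q : ℕ) : ℕ :=
  sSup {l | ∃ f, Implementable n q f ∧ Lmin n q f = l}

/-- `D(f, q)`: minimal depth of a circuit implementing `f` with `q` additional inputs. -/
noncomputable def Dmin (n q : ℕ) (f : (Fin n → Bool) → Fin n → Bool) : ℕ :=
  sInf {d | ∃ S : Circuit (n + q), Implements S f ∧ S.D = d}

/-- The Shannon depth function `D(n, q)`. -/
noncomputable def Dsh (n q : ℕ) : ℕ :=
  sSup {d | ∃ f, Implementable n q f ∧ Dmin n q f = d}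

/-- `W(f, q)`: minimal quantum weight of a circuit implementing `f` with `q`
additional inputs. -/
noncomputable def Wmin (WC WT : ℝ) (n q : ℕ) (f : (Fin n → Bool) → Fin n → Bool) : ℝ :=
  sInf {w | ∃ S : Circuit (n + q), Implements S f ∧ Circuit.W WC WT S = w}

/-- The Shannon quantum weight function `W(n, q)`. -/
noncomputable def Wsh (WC WT : ℝ) (n q : ℕ) : ℝ :=
  sSup {w | ∃ f, Implementable n q f ∧ Wmin WC WT n q f = w}

/-- `a ~ b`: `a n / b n → 1`. -/
def AsympEquiv (a b : ℕ → ℝ) : Prop :=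
  Tendsto (fun n => a n / b n) atTop (nhds 1)

/-- `a ≲ b`: `limsup (a n / b n) ≤ 1`. -/
def AsympLE (a b : ℕ → ℝ) : Prop :=
  Filter.limsup (fun n => a n / b n) atTop ≤ 1

/-- A growing function: nondecreasing and tending to `+∞`. -/
def Growing (φ : ℕ → ℝ) : Prop :=
  Monotone φ ∧ Tendsto φ atTop atTop

/-- `2 ^ (n - ⌈n / φ(n)⌉)` as a real number. -/
noncomputable def pow2e (φ : ℕ → ℝ) (n : ℕ) : ℝ :=
  (2 : ℝ) ^ ((n : ℤ) - ⌈(n : ℝ) / φ n⌉)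

end Rev

/-!
The construction is Lupanov's. Split the `n` variables into `k = ⌈n / φ n⌉` variables `y` and
`d = n - k` variables `z`. All minterms in `y` and all minterms in `z` cost `O(2 ^ d)` gates. The
`2 ^ k` minterms in `y` are cut into about `2 ^ k / s` blocks of `s = n - 2 * k`, and all `2 ^ s`
subset sums of every block are stored; since `2 ^ k * 2 ^ s = 2 ^ d`, this takes only `O(2 ^ d)`
lines. Each of the `n * 2 ^ d` functions of `y` obtained from the output coordinates by fixing `z`
is then the sum of one stored subset sum per block, for a total of `n * 2 ^ d * 2 ^ k / s ~ 2 ^ n`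
CNOT gates. Finally each output multiplexes its `2 ^ d` restrictions by the minterms in `z`, with
`2 ^ d` C²NOT gates. The hypothesis on `φ` gives `n * ψ n ≤ 2 ^ k`, which makes the `O(n * 2 ^ d)`
remaining gates negligible against `2 ^ n`.
-/

namespace Rev

section Gates

variable {N : ℕ}

theorem prod_eq_true_iff {ι : Type*} (s : Finset ι) (x : ι → Bool) :
    ∏ i ∈ s, x i = true ↔ ∀ i ∈ s, x i = true := by
  classical
  induction s using Finset.induction_on with
  | empty => simp [Bool.one_eq_true]
  | insert a s ha ih => simp [Finset.prod_insert ha, ih, Bool.mul_eq_and]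

theorem Gate.apply_eq_update (g : Gate N) (x : Fin N → Bool) :
    g.apply x = Function.update x g.t (x g.t + ∏ i ∈ g.I, x i) := by
  have conj_eq_prod : decide (∀ i ∈ g.I, x i = true) = ∏ i ∈ g.I, x i := by
    rw [Bool.eq_iff_iff, decide_eq_true_eq, prod_eq_true_iff]
  funext j
  rw [Gate.apply, Function.update_apply, conj_eq_prod, Bool.add_eq_xor]

theorem Circuit.eval_append (S S' : Circuit N) (x : Fin N → Bool) :
    Circuit.eval (S ++ S') x = S'.eval (S.eval x) :=
  List.foldl_append

theorem Circuit.L_append (S S' : Circuit N) : Circuit.L (S ++ S') = S.L + S'.L :=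
  List.length_append

theorem Circuit.LT_append (S S' : Circuit N) : Circuit.LT (S ++ S') = S.LT + S'.LT := by
  simp only [Circuit.LT, List.filter_append, List.length_append]

theorem Circuit.LC_le_L (S : Circuit N) : S.LC ≤ S.L :=
  List.length_filter_le _ _

theorem Circuit.LT_singleton (g : Gate N) :
    Circuit.LT [g] = if g.I.card = 2 then 1 else 0 := by
  by_cases h : g.I.card = 2 <;> simp [Circuit.LT, h]

end Gates

section Lines

variable {X : Type*} {N : ℕ} {L M M' : List (X → Bool)} {A : Set (X → Bool)} {f g : X → Bool}
  {c t c' t' : ℕ}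

/-- The contents of `N` lines at input `x`, when the first lines hold the functions listed in `L`
and the remaining ones hold `0`. -/
def lineValues (N : ℕ) (L : List (X → Bool)) (x : X) : Fin N → Bool :=
  fun i => L.getD i 0 x

theorem lineValues_concat (hN : L.length < N) (g : X → Bool) (x : X) :
    lineValues N (L ++ [g]) x = Function.update (lineValues N L x) ⟨L.length, hN⟩ (g x) := by
  funext i
  simp only [lineValues, Function.update_apply, Fin.ext_iff]
  split_ifs with hi
  · simp [hi]
  · rcases Nat.lt_or_gt_of_ne hi with hlt | hgt
    · rw [List.getD_append _ _ _ _ hlt]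
    · rw [List.getD_eq_default _ _ (by simpa using hgt), List.getD_eq_default _ _ hgt.le]

theorem lineValues_concat_zero (L : List (X → Bool)) (x : X) :
    lineValues N (L ++ [0]) x = lineValues N L x := by
  funext i
  simp only [lineValues, List.getD_eq_getElem?_getD]
  rcases lt_trichotomy (i : ℕ) L.length with h | h | h
  · rw [List.getElem?_append_left h]
  · simp [h]
  · rw [List.getElem?_eq_none (by simpa using h), List.getElem?_eq_none h.le]

theorem exists_gate_apply_lineValues {T : Finset (X → Bool)} (hT : T.card ≤ 2)
    (hTL : ∀ f ∈ T, f ∈ L) (hN : L.length < N) :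
    ∃ G : Gate N, G.I.card = T.card ∧ ∀ g x,
      G.apply (lineValues N (L ++ [g]) x) = lineValues N (L ++ [g + ∏ f ∈ T, f]) x := by
  have : Nonempty (Fin N) := ⟨⟨L.length, hN⟩⟩
  have exists_line : ∀ f ∈ T, ∃ i : Fin N, (i : ℕ) < L.length ∧ L.getD i 0 = f := fun f hf => by
    obtain ⟨i, hi, rfl⟩ := List.getElem_of_mem (hTL f hf)
    exact ⟨⟨i, hi.trans hN⟩, hi, List.getD_eq_getElem _ _ hi⟩
  choose! line line_lt getD_line using exists_line
  have line_injOn : Set.InjOn line T := fun f hf g hg h => by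
    rw [← getD_line f hf, h, getD_line g hg]
  have target_ne : ∀ f ∈ T, line f ≠ ⟨L.length, hN⟩ := fun f hf h =>
    (line_lt f hf).ne (congrArg Fin.val h)
  refine ⟨⟨T.image line, ⟨L.length, hN⟩, Finset.card_image_le.trans hT, ?_⟩,
    Finset.card_image_of_injOn line_injOn, fun g x => ?_⟩
  · simpa using target_ne
  · have prod_controls : ∏ i ∈ T.image line, lineValues N (L ++ [g]) x i = ∏ f ∈ T, f x := by
      rw [Finset.prod_image line_injOn]
      refine Finset.prod_congr rfl fun f hf => ?_
      rw [lineValues_concat hN, Function.update_of_ne (target_ne f hf), lineValues,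
        getD_line f hf]
    rw [Gate.apply_eq_update, prod_controls]
    simp only [lineValues_concat hN, Function.update_self, Function.update_idem, Pi.add_apply,
      Finset.prod_apply]

/-- With at most `c` gates, at most `t` of them C²NOT, lines holding `L` can be extended by
zero-initialised lines so as to hold `L ++ M`. -/
def Extends (L M : List (X → Bool)) (c t : ℕ) : Prop :=
  ∀ N, (L ++ M).length ≤ N → ∃ S : Circuit N,
    (∀ x, S.eval (lineValues N L x) = lineValues N (L ++ M) x) ∧ S.L ≤ c ∧ S.LT ≤ t

theorem Extends.nil (L : List (X → Bool)) : Extends L [] 0 0 :=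
  fun _ _ => ⟨[], fun _ => by rw [List.append_nil]; rfl, le_rfl, le_rfl⟩

theorem Extends.mono (h : Extends L M c t) (hc : c ≤ c') (ht : t ≤ t') : Extends L M c' t' :=
  fun N hN =>
    let ⟨S, hS, hSc, hSt⟩ := h N hN
    ⟨S, hS, hSc.trans hc, hSt.trans ht⟩

theorem Extends.trans (h : Extends L M c t) (h' : Extends (L ++ M) M' c' t') :
    Extends L (M ++ M') (c + c') (t + t') := by
  intro N hN
  rw [← List.append_assoc] at hN ⊢
  obtain ⟨S, hS, hSc, hSt⟩ := h N (by rw [List.length_append] at hN; omega)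
  obtain ⟨S', hS', hSc', hSt'⟩ := h' N hN
  refine ⟨S ++ S', fun x => by rw [Circuit.eval_append, hS, hS'], ?_, ?_⟩
  · rw [Circuit.L_append]; omega
  · rw [Circuit.LT_append]; omega

theorem Extends.add_prod (h : Extends L [g] c t) {T : Finset (X → Bool)} (hT : T.card ≤ 2)
    (hTL : ∀ f ∈ T, f ∈ L) :
    Extends L [g + ∏ f ∈ T, f] (c + 1) (t + if T.card = 2 then 1 else 0) := by
  intro N hN
  rw [List.length_append, List.length_singleton] at hN
  obtain ⟨S, hS, hSc, hSt⟩ := h N (by simpa using hN)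
  obtain ⟨G, hG, hGapply⟩ := exists_gate_apply_lineValues hT hTL hN
  refine ⟨S ++ [G], fun x => ?_, ?_, ?_⟩
  · rw [Circuit.eval_append, hS]
    exact hGapply g x
  · rw [Circuit.L_append]
    exact Nat.add_le_add_right hSc 1
  · rw [Circuit.LT_append, Circuit.LT_singleton, hG]
    exact Nat.add_le_add_right hSt _

/-- `IsQuadratic A c t g`: over the Boolean ring `X → Bool`, the function `g` is a sum of at most
`c` products of at most two elements of `A`, at most `t` of these products having two factors. The
three kinds of summands are those that a NOT, a CNOT and a C²NOT gate add to their target. -/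
inductive IsQuadratic (A : Set (X → Bool)) : ℕ → ℕ → (X → Bool) → Prop
  | zero (c t : ℕ) : IsQuadratic A c t 0
  | add_one {c t : ℕ} {g : X → Bool} : IsQuadratic A c t g → IsQuadratic A (c + 1) t (g + 1)
  | add_mem {c t : ℕ} {g f : X → Bool} : IsQuadratic A c t g → f ∈ A →
      IsQuadratic A (c + 1) t (g + f)
  | add_mul {c t : ℕ} {g f₁ f₂ : X → Bool} : IsQuadratic A c t g → f₁ ∈ A → f₂ ∈ A →
      IsQuadratic A (c + 1) (t + 1) (g + f₁ * f₂)

namespace IsQuadratic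

theorem one : IsQuadratic A 1 0 1 := by
  simpa only [zero_add] using (zero 0 0).add_one

theorem of_mem (hf : f ∈ A) : IsQuadratic A 1 0 f := by
  simpa only [zero_add] using (zero 0 0).add_mem hf

theorem mul (hf : f ∈ A) (hg : g ∈ A) : IsQuadratic A 1 1 (f * g) := by
  simpa only [zero_add] using (zero 0 0).add_mul hf hg

theorem add (hf : IsQuadratic A c t f) (hg : IsQuadratic A c' t' g) :
    IsQuadratic A (c + c') (t + t') (f + g) := by
  induction hg with
  | zero c' t' =>
    rw [add_zero]
    induction hf with
    | zero => exact zero _ _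
    | add_one _ ih => simpa only [add_right_comm] using ih.add_one
    | add_mem _ hf ih => simpa only [add_right_comm] using ih.add_mem hf
    | add_mul _ hf₁ hf₂ ih => simpa only [add_right_comm] using ih.add_mul hf₁ hf₂
  | add_one _ ih => simpa only [add_assoc] using ih.add_one
  | add_mem _ hf ih => simpa only [add_assoc] using ih.add_mem hf
  | add_mul _ hf₁ hf₂ ih => simpa only [add_assoc] using ih.add_mul hf₁ hf₂

theorem mono (h : IsQuadratic A c t g) (hc : c ≤ c') (ht : t ≤ t') : IsQuadratic A c' t' g := by
  simpa only [Nat.add_sub_cancel' hc, Nat.add_sub_cancel' ht, add_zero] using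
    h.add (zero (c' - c) (t' - t))

theorem sum {ι : Type*} (s : Finset ι) {g : ι → X → Bool} (h : ∀ i ∈ s, IsQuadratic A c t (g i)) :
    IsQuadratic A (s.card * c) (s.card * t) (∑ i ∈ s, g i) := by
  classical
  induction s using Finset.induction_on with
  | empty => exact zero _ _
  | insert a s ha ih =>
    rw [Finset.forall_mem_insert] at h
    rw [Finset.sum_insert ha, Finset.card_insert_of_notMem ha, Nat.succ_mul, Nat.succ_mul,
      add_comm (g a)]
    exact (ih h.2).add h.1

theorem extends_singleton (h : IsQuadratic A c t g) (hA : ∀ f ∈ A, f ∈ L) : Extends L [g] c t := by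
  classical
  induction h with
  | zero c t =>
    exact fun N _ => ⟨[], fun x => (lineValues_concat_zero L x).symm, Nat.zero_le c, Nat.zero_le t⟩
  | add_one _ ih => simpa using ih.add_prod (T := ∅) (by simp) (by simp)
  | @add_mem _ _ _ f _ hf ih =>
    simpa using ih.add_prod (T := {f}) (by simp) (by simpa using hA f hf)
  | @add_mul c t g f₁ f₂ _ hf₁ hf₂ ih =>
    have prod_pair : ∏ f ∈ {f₁, f₂}, f = f₁ * f₂ := by
      rcases eq_or_ne f₁ f₂ with rfl | hne
      · ext x; simp [Bool.mul_eq_and]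
      · exact Finset.prod_pair hne
    have h := ih.add_prod (T := {f₁, f₂}) Finset.card_le_two (by simp [hA _ hf₁, hA _ hf₂])
    rw [prod_pair] at h
    exact h.mono le_rfl (by split_ifs <;> omega)

end IsQuadratic

theorem extends_of_forall_isQuadratic (hM : ∀ g ∈ M, IsQuadratic A c t g) (hA : ∀ f ∈ A, f ∈ L) :
    Extends L M (M.length * c) (M.length * t) := by
  induction M using List.reverseRecOn with
  | nil => simpa using Extends.nil L
  | append_singleton M g ih =>
    have extend_last : Extends (L ++ M) [g] c t :=
      (hM g (by simp)).extends_singleton fun f hf => List.mem_append_left M (hA f hf)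
    have extend_init := ih fun g hg => hM g (List.mem_append_left _ hg)
    simpa [Nat.succ_mul] using extend_init.trans extend_last

end Lines

section Computability

variable {X : Type*} {A B B' C : Set (X → Bool)} {l c t l' c' t' : ℕ}

/-- Any lines holding all functions in `A` can be extended by at most `l` lines holding all
functions in `B`, using at most `c` gates, at most `t` of them C²NOT. -/
def ComputableFrom (A B : Set (X → Bool)) (l c t : ℕ) : Prop :=
  ∀ L : List (X → Bool), (∀ f ∈ A, f ∈ L) →
    ∃ M, (∀ f ∈ B, f ∈ M) ∧ M.length ≤ l ∧ Extends L M c t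

theorem ComputableFrom.mono (h : ComputableFrom A B l c t) (hB : B' ⊆ B) (hl : l ≤ l')
    (hc : c ≤ c') (ht : t ≤ t') : ComputableFrom A B' l' c' t' := fun L hL =>
  let ⟨M, hBM, hlen, hM⟩ := h L hL
  ⟨M, fun f hf => hBM f (hB hf), hlen.trans hl, hM.mono hc ht⟩

theorem ComputableFrom.trans (h : ComputableFrom A B l c t)
    (h' : ComputableFrom (A ∪ B) C l' c' t') :
    ComputableFrom A (B ∪ C) (l + l') (c + c') (t + t') := by
  intro L hL
  obtain ⟨M, hBM, hlen, hM⟩ := h L hL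
  obtain ⟨M', hCM', hlen', hM'⟩ := h' (L ++ M) fun f hf =>
    List.mem_append.2 (hf.imp (hL f) (hBM f))
  refine ⟨M ++ M', fun f hf => List.mem_append.2 (hf.imp (hBM f) (hCM' f)), ?_, hM.trans hM'⟩
  rw [List.length_append]
  omega

theorem computableFrom_range {ι : Type*} [Fintype ι] {g : ι → X → Bool}
    (h : ∀ i, IsQuadratic A c t (g i)) :
    ComputableFrom A (Set.range g) (Fintype.card ι) (Fintype.card ι * c)
      (Fintype.card ι * t) := by
  intro L hL
  let M := Finset.univ.toList.map g
  have hlen : M.length = Fintype.card ι := by simp [M]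
  refine ⟨M, by simp [M], hlen.le, ?_⟩
  rw [← hlen]
  exact extends_of_forall_isQuadratic (by simpa [M] using h) hL

end Computability

section FiberIndicators

variable {X Y : Type*} [DecidableEq Y] {A : Set (X → Bool)}

/-- The indicator function of the fiber of `y` over `σ`. When `y` selects some of the variables,
these are the minterms (complete elementary conjunctions) in the selected variables. -/
def fiberIndicator (y : X → Y) (σ : Y) : X → Bool :=
  fun x => if y x = σ then 1 else 0

theorem sum_fiberIndicator_mul [Fintype Y] (y : X → Y) (h : Y → X → Bool) :
    ∑ σ, fiberIndicator y σ * h σ = fun x => h (y x) x := by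
  funext x
  simp [fiberIndicator]

theorem fiberIndicator_fin_succ {d : ℕ} (v : Fin (d + 1) → X → Bool) (σ : Fin (d + 1) → Bool) :
    fiberIndicator (fun x j => v j x) σ =
      fiberIndicator (fun x (j : Fin d) => v j.castSucc x) (fun j => σ j.castSucc) *
        (v (Fin.last d) + 1 + fun _ => σ (Fin.last d)) := by
  funext x
  have forall_iff : (fun j => v j x) = σ ↔
      (fun j : Fin d => v j.castSucc x) = (fun j => σ j.castSucc) ∧
        v (Fin.last d) x = σ (Fin.last d) := by
    simp only [funext_iff, Fin.forall_fin_succ']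
  simp only [fiberIndicator, forall_iff, ite_and, Pi.mul_apply, Pi.add_apply, Pi.one_apply,
    ite_mul, one_mul, zero_mul]
  congr 1
  cases v (Fin.last d) x <;> cases σ (Fin.last d) <;> rfl

theorem isQuadratic_mul_literal {f v : X → Bool} (hf : f ∈ A) (hv : v ∈ A) (b : Bool) :
    IsQuadratic A 2 1 (f * (v + 1 + fun _ => b)) := by
  cases b
  · have expand : f * (v + 1 + fun _ => false) = f * v + f := by
      funext x
      simp only [Pi.mul_apply, Pi.add_apply, Pi.one_apply]
      cases f x <;> cases v x <;> rfl
    rw [expand]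
    exact (IsQuadratic.mul hf hv).add (.of_mem hf)
  · have expand : f * (v + 1 + fun _ => true) = f * v := by
      funext x
      simp only [Pi.mul_apply, Pi.add_apply, Pi.one_apply]
      cases f x <;> cases v x <;> rfl
    rw [expand]
    exact (IsQuadratic.mul hf hv).mono one_le_two le_rfl

theorem computableFrom_fiberIndicator {d : ℕ} {v : Fin d → X → Bool} (hv : ∀ i, v i ∈ A) :
    ComputableFrom A (Set.range (fiberIndicator fun x j => v j x))
      (2 ^ (d + 1)) (2 * 2 ^ (d + 1)) (2 ^ (d + 1)) := by
  induction d with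
  | zero =>
    have eq_one : ∀ σ, fiberIndicator (fun x (j : Fin 0) => v j x) σ = 1 := fun σ =>
      funext fun x => if_pos (Subsingleton.elim _ _)
    have h := computableFrom_range (A := A) (g := fiberIndicator fun x (j : Fin 0) => v j x)
      fun σ => (eq_one σ).symm ▸ IsQuadratic.one
    exact h.mono subset_rfl (by simp) (by simp) (by simp)
  | succ d ih =>
    have extend_minterms := computableFrom_range
      (A := A ∪ Set.range (fiberIndicator fun x (j : Fin d) => v j.castSucc x))
      (g := fiberIndicator fun x (j : Fin (d + 1)) => v j x) (c := 2) (t := 1) fun σ => by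
        rw [fiberIndicator_fin_succ]
        exact isQuadratic_mul_literal (Or.inr ⟨_, rfl⟩) (Or.inl (hv _)) _
    refine ((ih fun i => hv i.castSucc).trans extend_minterms).mono Set.subset_union_right
      ?_ ?_ ?_ <;>
    · simp only [Fintype.card_fun, Fintype.card_bool, Fintype.card_fin]
      omega

/-- For `iT = (i, T)`, the sum of the indicators of those points of the `i`-th block that `T`
selects, where `e : Y ↪ Fin p × Fin s` splits `Y` into `p` blocks of at most `s` points each. -/
def blockSum [Fintype Y] {p s : ℕ} (y : X → Y) (e : Y ↪ Fin p × Fin s)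
    (iT : Fin p × (Fin s → Bool)) : X → Bool :=
  ∑ σ with (e σ).1 = iT.1 ∧ iT.2 (e σ).2 = true, fiberIndicator y σ

variable [Fintype Y] {p s : ℕ}

theorem isQuadratic_blockSum {y : X → Y} (hA : ∀ σ, fiberIndicator y σ ∈ A)
    (e : Y ↪ Fin p × Fin s) (iT : Fin p × (Fin s → Bool)) :
    IsQuadratic A s 0 (blockSum y e iT) := by
  have card_block_le :
      (Finset.univ.filter fun σ => (e σ).1 = iT.1 ∧ iT.2 (e σ).2 = true).card ≤ s := by
    calc _ ≤ (Finset.univ : Finset (Fin s)).card := by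
          refine Finset.card_le_card_of_injOn (fun σ => (e σ).2) (by simp) fun σ hσ τ hτ h => ?_
          simp only [Finset.coe_filter, Finset.mem_univ, true_and, Set.mem_ofPred_eq] at hσ hτ
          exact e.injective (Prod.ext (hσ.1.trans hτ.1.symm) h)
      _ = s := by simp
  exact (IsQuadratic.sum _ fun σ _ => .of_mem (hA σ)).mono (by simpa using card_block_le) (by simp)

theorem sum_blockSum (y : X → Y) (e : Y ↪ Fin p × Fin s) (h : Y → Bool) :
    ∑ i, blockSum y e (i, fun m => decide (∃ σ, e σ = (i, m) ∧ h σ = true)) = h ∘ y := by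
  have selected_iff : ∀ i σ, ((e σ).1 = i ∧ decide (∃ τ, e τ = (i, (e σ).2) ∧ h τ = true) = true) ↔
      (e σ).1 = i ∧ h σ = true := by
    intro i σ
    rw [decide_eq_true_eq]
    refine and_congr_right fun hi => ⟨?_, fun hσ => ⟨σ, Prod.ext hi rfl, hσ⟩⟩
    rintro ⟨τ, hτ, hhτ⟩
    rwa [← e.injective (hτ.trans (Prod.ext hi rfl : e σ = (i, (e σ).2)).symm)]
  calc ∑ i, blockSum y e (i, fun m => decide (∃ σ, e σ = (i, m) ∧ h σ = true))
      = ∑ σ with h σ = true, fiberIndicator y σ := by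
        simp only [blockSum, selected_iff]
        rw [← Finset.sum_fiberwise _ fun σ => (e σ).1]
        simp only [Finset.filter_filter, and_comm]
    _ = ∑ σ, fiberIndicator y σ * fun _ => h σ := by
        rw [Finset.sum_filter]
        refine Finset.sum_congr rfl fun σ _ => ?_
        cases h σ <;> funext x <;> simp [Bool.mul_eq_and, Bool.zero_eq_false]
    _ = h ∘ y := sum_fiberIndicator_mul y fun σ _ => h σ

theorem computableFrom_range_comp {Ω : Type*} [Fintype Ω] {y : X → Y}
    (hA : ∀ σ, fiberIndicator y σ ∈ A) (hps : Fintype.card Y ≤ p * s) (h : Ω → Y → Bool) :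
    ComputableFrom A (Set.range fun ω => h ω ∘ y) (p * 2 ^ s + Fintype.card Ω)
      (p * 2 ^ s * s + Fintype.card Ω * p) 0 := by
  obtain ⟨e⟩ : Nonempty (Y ↪ Fin p × Fin s) :=
    Function.Embedding.nonempty_of_card_le (by simpa using hps)
  have block_sums := computableFrom_range (isQuadratic_blockSum hA e)
  have compositions := computableFrom_range (A := A ∪ Set.range (blockSum y e))
    (g := fun ω => h ω ∘ y) (c := p) (t := 0) fun ω => by
      rw [← sum_blockSum y e (h ω)]
      simpa using IsQuadratic.sum (Finset.univ : Finset (Fin p)) fun i _ =>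
        IsQuadratic.of_mem (A := A ∪ Set.range (blockSum y e)) (Or.inr ⟨(i, _), rfl⟩)
  simpa using (block_sums.trans compositions).mono Set.subset_union_right le_rfl le_rfl le_rfl

theorem isQuadratic_multiplexer {z : X → Y} {h : Y → X → Bool} (hz : ∀ a, fiberIndicator z a ∈ A)
    (hh : ∀ a, h a ∈ A) :
    IsQuadratic A (Fintype.card Y) (Fintype.card Y) fun x => h (z x) x := by
  rw [← sum_fiberIndicator_mul]
  simpa using IsQuadratic.sum Finset.univ fun a _ => .mul (hz a) (hh a)

end FiberIndicators

section Implementation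

variable {n q : ℕ}

theorem pad_eq_lineValues (x : Fin n → Bool) :
    (pad x : Fin (n + q) → Bool) = lineValues (n + q) (List.ofFn fun i y => y i) x := by
  funext i
  rw [pad, lineValues]
  split_ifs with hi
  · rw [List.getD_eq_getElem _ _ (by simpa using hi), List.getElem_ofFn]
  · rw [List.getD_eq_default _ _ (by simpa using hi)]
    rfl

theorem implements_of_lines {m : ℕ} {S : Circuit (n + q)} {f : (Fin n → Bool) → Fin m → Bool}
    (line : Fin m ↪ Fin (n + q)) (h : ∀ x j, S.eval (pad x) (line j) = f x j) :
    Implements S f := by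
  have hm : m ≤ n + q := by simpa using Fintype.card_le_of_embedding line
  obtain ⟨π, hπ⟩ := (Equiv.Perm.isMultiplyPretransitive (Fin (n + q)) m).exists_smul_eq
    (Fin.castLEEmb hm) line
  refine ⟨hm, π, fun x j hj => ?_⟩
  rw [← h, ← hπ]
  rfl

theorem exists_implements_of_computableFrom {m l c t c' t' : ℕ}
    {f : (Fin n → Bool) → Fin m → Bool} {B : Set ((Fin n → Bool) → Bool)}
    (hB : ComputableFrom (Set.range fun i x => x i) B l c t)
    (hf : ∀ j, IsQuadratic (Set.range (fun i x => x i) ∪ B) c' t' fun x => f x j)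
    (hq : l + m ≤ q) :
    ∃ S : Circuit (n + q), Implements S f ∧ S.L ≤ c + m * c' ∧ S.LT ≤ t + m * t' := by
  let L : List ((Fin n → Bool) → Bool) := List.ofFn fun i x => x i
  let F : List ((Fin n → Bool) → Bool) := List.ofFn fun j x => f x j
  obtain ⟨M, hBM, hlen, hM⟩ := hB L (by simp [L])
  have extend_outputs : Extends (L ++ M) F (m * c') (m * t') := by
    have available : ∀ g ∈ Set.range (fun i x => x i) ∪ B, g ∈ L ++ M := fun g hg =>
      List.mem_append.2 (hg.imp (by simp [L]) (hBM g))
    simpa [F] using extends_of_forall_isQuadratic (M := F) (by simpa [F] using hf) available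
  obtain ⟨S, hS, hSc, hSt⟩ := hM.trans extend_outputs (n + q) (by simp [L, F]; omega)
  let line : Fin m ↪ Fin (n + q) :=
    ⟨fun j => ⟨n + M.length + j, by omega⟩, fun i j hij => by simpa [Fin.ext_iff] using hij⟩
  refine ⟨S, implements_of_lines line fun x j => ?_, hSc, hSt⟩
  rw [pad_eq_lineValues, hS, lineValues, ← List.append_assoc]
  have line_eq : (line j : ℕ) = (L ++ M).length + j := by
    rw [List.length_append, List.length_ofFn]
    rfl
  simp [line_eq, List.getD_eq_getElem?_getD, F, -List.append_assoc]

theorem exists_implements_of_two_pow_le_mul {k d m p s : ℕ} (hps : 2 ^ k ≤ p * s)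
    (hq : 2 ^ (k + 1) + (2 ^ (d + 1) + (p * 2 ^ s + m * 2 ^ d)) + m ≤ q)
    (f : (Fin (k + d) → Bool) → Fin m → Bool) :
    ∃ S : Circuit (k + d + q), Implements S f ∧
      S.L ≤ 2 * 2 ^ (k + 1) + (2 * 2 ^ (d + 1) + (p * 2 ^ s * s + m * 2 ^ d * p)) + m * 2 ^ d ∧
      S.LT ≤ 2 ^ (k + 1) + 2 ^ (d + 1) + m * 2 ^ d := by
  let y : (Fin (k + d) → Bool) → Fin k → Bool := fun x j => x (Fin.castAdd d j)
  let z : (Fin (k + d) → Bool) → Fin d → Bool := fun x j => x (Fin.natAdd k j)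
  let restriction : Fin m × (Fin d → Bool) → (Fin k → Bool) → Bool :=
    fun ja σ => f (Fin.append σ ja.2) ja.1
  let inputs : Set ((Fin (k + d) → Bool) → Bool) := Set.range fun i x => x i
  have y_minterms : ComputableFrom inputs (Set.range (fiberIndicator y)) _ _ _ :=
    computableFrom_fiberIndicator fun j => ⟨Fin.castAdd d j, rfl⟩
  have z_minterms : ComputableFrom (inputs ∪ Set.range (fiberIndicator y))
      (Set.range (fiberIndicator z)) _ _ _ :=
    computableFrom_fiberIndicator fun j => Or.inl ⟨Fin.natAdd k j, rfl⟩
  have restrictions := computableFrom_range_comp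
    (A := inputs ∪ Set.range (fiberIndicator y) ∪ Set.range (fiberIndicator z)) (y := y)
    (fun σ => Or.inl (Or.inr ⟨σ, rfl⟩)) (by simpa using hps) restriction
  let available := inputs ∪ (Set.range (fiberIndicator y) ∪
    (Set.range (fiberIndicator z) ∪ Set.range fun ja => restriction ja ∘ y))
  have outputs : ∀ j, IsQuadratic available (2 ^ d) (2 ^ d) fun x => f x j := fun j => by
    have multiplexed := isQuadratic_multiplexer (A := available) (z := z)
      (h := fun a => restriction (j, a) ∘ y) (fun a => Or.inr (Or.inr (Or.inl ⟨a, rfl⟩)))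
      fun a => Or.inr (Or.inr (Or.inr ⟨(j, a), rfl⟩))
    simpa [restriction, y, z, Fin.append_castAdd_natAdd] using multiplexed
  simpa [add_assoc] using exists_implements_of_computableFrom
    (y_minterms.trans (z_minterms.trans restrictions)) outputs (by simpa using hq)

end Implementation

section FiniteBound

variable {k s n q : ℕ} {WC WT : ℝ}

theorem lupanov_lines_le (hn : n ≤ 2 ^ k) :
    2 ^ (k + 1) + (2 ^ (k + s + 1) + ((2 ^ k / s + 1) * 2 ^ s + n * 2 ^ (k + s))) + n ≤
      (n + 7) * 2 ^ (k + s) := by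
  have pow_k_le : 2 ^ k ≤ 2 ^ (k + s) := Nat.pow_le_pow_right two_pos (by omega)
  have block_sums_le : (2 ^ k / s + 1) * 2 ^ s ≤ 2 * 2 ^ (k + s) := by
    calc (2 ^ k / s + 1) * 2 ^ s ≤ (2 ^ k + 2 ^ k) * 2 ^ s := by
          gcongr
          · exact Nat.div_le_self _ _
          · exact Nat.one_le_two_pow
      _ = 2 * 2 ^ (k + s) := by ring
  rw [pow_succ 2 k, pow_succ 2 (k + s), add_mul n]
  omega

theorem lupanov_gates_le (hn : 0 < n) (hsn : s ≤ n) :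
    2 * 2 ^ (k + 1) + (2 * 2 ^ (k + s + 1) +
        ((2 ^ k / s + 1) * 2 ^ s * s + n * 2 ^ (k + s) * (2 ^ k / s + 1))) + n * 2 ^ (k + s) ≤
      n * 2 ^ (k + s) * (2 ^ k / s + 12) := by
  have pow_k_le : 2 ^ k ≤ 2 ^ (k + s) := Nat.pow_le_pow_right two_pos (by omega)
  have pow_s_le : 2 ^ s ≤ 2 ^ (k + s) := Nat.pow_le_pow_right two_pos (by omega)
  have pow_le_mul : 2 ^ (k + s) ≤ n * 2 ^ (k + s) := Nat.le_mul_of_pos_left _ hn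
  have block_sums_le : (2 ^ k / s + 1) * 2 ^ s * s ≤ 2 ^ (k + s) + n * 2 ^ (k + s) := by
    calc (2 ^ k / s + 1) * 2 ^ s * s = (2 ^ k / s * s) * 2 ^ s + s * 2 ^ s := by ring
      _ ≤ 2 ^ k * 2 ^ s + n * 2 ^ (k + s) := by
          gcongr
          exact Nat.div_mul_le_self _ _
      _ = 2 ^ (k + s) + n * 2 ^ (k + s) := by rw [pow_add]
  rw [pow_succ 2 k, pow_succ 2 (k + s), mul_add _ _ 1, mul_add _ _ 12]
  omega

theorem lupanov_toffolis_le (hn : 0 < n) :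
    2 ^ (k + 1) + 2 ^ (k + s + 1) + n * 2 ^ (k + s) ≤ n * 2 ^ (k + s) * 5 := by
  have pow_k_le : 2 ^ k ≤ 2 ^ (k + s) := Nat.pow_le_pow_right two_pos (by omega)
  have pow_le_mul : 2 ^ (k + s) ≤ n * 2 ^ (k + s) := Nat.le_mul_of_pos_left _ hn
  rw [pow_succ 2 k, pow_succ 2 (k + s)]
  omega

theorem exists_implements_of_eq_add (hs : 0 < s) (hn : n = k + (k + s)) (hnk : n ≤ 2 ^ k)
    (f : (Fin n → Bool) → Fin n → Bool) :
    ∃ S : Circuit (n + (n + 7) * 2 ^ (k + s)), Implements S f ∧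
      S.L ≤ n * 2 ^ (k + s) * (2 ^ k / s + 12) ∧ S.LT ≤ n * 2 ^ (k + s) * 5 := by
  have covers : 2 ^ k ≤ (2 ^ k / s + 1) * s :=
    (Nat.lt_div_mul_add hs).le.trans_eq (Nat.succ_mul _ _).symm
  subst hn
  obtain ⟨S, hS, hSL, hSLT⟩ := exists_implements_of_two_pow_le_mul covers (lupanov_lines_le hnk) f
  exact ⟨S, hS, hSL.trans (lupanov_gates_le (by omega) (by omega)),
    hSLT.trans (lupanov_toffolis_le (by omega))⟩

theorem Circuit.W_nonneg (hWC : 0 ≤ WC) (hWT : 0 ≤ WT) {N : ℕ} (S : Circuit N) :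
    0 ≤ S.W WC WT := by
  unfold Circuit.W
  positivity

theorem Wsh_nonneg (hWC : 0 ≤ WC) (hWT : 0 ≤ WT) (n q : ℕ) : 0 ≤ Wsh WC WT n q := by
  refine Real.sSup_nonneg ?_
  rintro _ ⟨f, -, rfl⟩
  refine Real.sInf_nonneg ?_
  rintro _ ⟨S, -, rfl⟩
  exact S.W_nonneg hWC hWT

theorem Wsh_le_of_forall_exists_implements {c t : ℕ} (hWC : 0 ≤ WC) (hWT : 0 ≤ WT)
    (h : ∀ f : (Fin n → Bool) → Fin n → Bool,
      ∃ S : Circuit (n + q), Implements S f ∧ S.LC ≤ c ∧ S.LT ≤ t) :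
    Wsh WC WT n q ≤ WC * c + WT * t := by
  refine Real.sSup_le ?_ (by positivity)
  rintro _ ⟨f, -, rfl⟩
  obtain ⟨S, hS, hSc, hSt⟩ := h f
  have bddBelow : BddBelow {w | ∃ S : Circuit (n + q), Implements S f ∧ S.W WC WT = w} :=
    ⟨0, by rintro _ ⟨S, -, rfl⟩; exact S.W_nonneg hWC hWT⟩
  calc Wmin WC WT n q f ≤ S.W WC WT := csInf_le bddBelow ⟨S, hS, rfl⟩
    _ ≤ WC * c + WT * t := by unfold Circuit.W; gcongr

theorem Wsh_le_of_eq_add (hWC : 0 ≤ WC) (hWT : 0 ≤ WT) (hs : 0 < s) (hn : n = k + (k + s))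
    (hnk : n ≤ 2 ^ k) :
    Wsh WC WT n ((n + 7) * 2 ^ (k + s)) ≤
      WC * (n / s * 2 ^ n) + (12 * WC + 5 * WT) * (n * 2 ^ (k + s)) := by
  have block_count_le : ((2 ^ k / s : ℕ) : ℝ) ≤ 2 ^ k / s := by
    simpa using Nat.cast_div_le (α := ℝ) (m := 2 ^ k) (n := s)
  have pow_n : (2 : ℝ) ^ n = 2 ^ k * 2 ^ (k + s) := by rw [hn, pow_add 2 k (k + s)]
  calc Wsh WC WT n ((n + 7) * 2 ^ (k + s))
      ≤ WC * (n * 2 ^ (k + s) * (2 ^ k / s + 12) : ℕ) + WT * (n * 2 ^ (k + s) * 5 : ℕ) :=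
        Wsh_le_of_forall_exists_implements hWC hWT fun f =>
          let ⟨S, hS, hSL, hSLT⟩ := exists_implements_of_eq_add hs hn hnk f
          ⟨S, hS, S.LC_le_L.trans hSL, hSLT⟩
    _ ≤ WC * (n * 2 ^ (k + s) * (2 ^ k / s + 12)) + WT * (n * 2 ^ (k + s) * 5) := by
        push_cast
        gcongr
    _ = WC * (n / s * 2 ^ n) + (12 * WC + 5 * WT) * (n * 2 ^ (k + s)) := by
        rw [pow_n]
        ring

end FiniteBound

section Asymptotics

variable {φ ψ : ℕ → ℝ} {WC WT : ℝ}

theorem asympLE_of_eventually_div_le {a b u : ℕ → ℝ} (hnonneg : ∀ᶠ n in atTop, 0 ≤ a n / b n)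
    (hle : ∀ᶠ n in atTop, a n / b n ≤ u n) (hu : Tendsto u atTop (nhds 1)) : AsympLE a b := by
  unfold AsympLE
  rw [← hu.limsup_eq]
  exact limsup_le_limsup hle (IsBoundedUnder.isCoboundedUnder_le ⟨0, eventually_map.2 hnonneg⟩)
    hu.isBoundedUnder_le

theorem tendsto_ceil_div_div_atTop (hφ : Tendsto φ atTop atTop) :
    Tendsto (fun n : ℕ => (⌈n / φ n⌉₊ / n : ℝ)) atTop (nhds 0) := by
  have upper : Tendsto (fun n : ℕ => (1 / φ n + 1 / n : ℝ)) atTop (nhds 0) := by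
    simpa using (hφ.const_div_atTop 1).add (tendsto_const_div_atTop_nhds_zero_nat (1 : ℝ))
  refine squeeze_zero' (.of_forall fun n => by positivity) ?_ upper
  filter_upwards [hφ.eventually_gt_atTop 0, eventually_gt_atTop 0] with n hφn hn
  have ceil_le := (Nat.ceil_lt_add_one (a := n / φ n) (by positivity)).le
  calc (⌈n / φ n⌉₊ / n : ℝ) ≤ (n / φ n + 1) / n := by gcongr
    _ = 1 / φ n + 1 / n := by field_simp

theorem eventually_two_mul_ceil_div_lt (hφ : Tendsto φ atTop atTop) :
    ∀ᶠ n : ℕ in atTop, 2 * ⌈n / φ n⌉₊ < n := by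
  filter_upwards [(tendsto_ceil_div_div_atTop hφ).eventually_lt_const one_half_pos,
    eventually_gt_atTop 0] with n hlt hn
  rw [div_lt_iff₀ (by positivity)] at hlt
  have : (2 * ⌈n / φ n⌉₊ : ℝ) < n := by linarith
  exact_mod_cast this

theorem tendsto_div_sub_two_mul_ceil (hφ : Tendsto φ atTop atTop) :
    Tendsto (fun n : ℕ => (n / (n - 2 * ⌈n / φ n⌉₊ : ℕ) : ℝ)) atTop (nhds 1) := by
  have limit : Tendsto (fun n : ℕ => (1 - 2 * (⌈n / φ n⌉₊ / n) : ℝ)⁻¹) atTop (nhds 1) := by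
    simpa using
      (((tendsto_ceil_div_div_atTop hφ).const_mul 2).const_sub 1).inv₀ (by norm_num)
  refine limit.congr' ?_
  filter_upwards [eventually_two_mul_ceil_div_lt hφ] with n hn
  have hn₀ : (n : ℝ) ≠ 0 := by norm_cast; omega
  rw [Nat.cast_sub hn.le, ← inv_div]
  push_cast
  field_simp

theorem eventually_pow2e_eq (hφ : Tendsto φ atTop atTop) :
    ∀ᶠ n in atTop, pow2e φ n = 2 ^ (n - ⌈n / φ n⌉₊) := by
  filter_upwards [hφ.eventually_ge_atTop 0, eventually_two_mul_ceil_div_lt hφ] with n hφn hn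
  rw [pow2e, ← Int.natCast_ceil_eq_ceil (by positivity), ← zpow_natCast, Nat.cast_sub (by omega)]

theorem eventually_mul_le_two_pow_ceil (hψ : Tendsto ψ atTop atTop) (hφ : Tendsto φ atTop atTop)
    (hφψ : ∀ᶠ n in atTop, φ n ≤ (n : ℝ) / (Real.logb 2 n + Real.logb 2 (ψ n))) :
    ∀ᶠ n : ℕ in atTop, n * ψ n ≤ 2 ^ ⌈n / φ n⌉₊ := by
  filter_upwards [hφψ, hφ.eventually_gt_atTop 0, hψ.eventually_ge_atTop 1,
    eventually_gt_atTop 1] with n hle hφn hψn hn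
  have hn₁ : (1 : ℝ) < n := by exact_mod_cast hn
  have logb_n_pos : 0 < Real.logb 2 n := Real.logb_pos one_lt_two hn₁
  have logb_ψ_nonneg : 0 ≤ Real.logb 2 (ψ n) := Real.logb_nonneg one_lt_two hψn
  have logb_le : Real.logb 2 (n * ψ n) ≤ ⌈n / φ n⌉₊ := by
    rw [Real.logb_mul (by positivity) (by positivity)]
    exact ((le_div_comm₀ hφn (by positivity)).1 hle).trans (Nat.le_ceil _)
  rwa [Real.logb_le_iff_le_rpow one_lt_two (by positivity), Real.rpow_natCast] at logb_le

theorem asympEquiv_mul_pow2e (hφ : Tendsto φ atTop atTop) :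
    AsympEquiv (fun n => (((n + 7) * 2 ^ (n - ⌈n / φ n⌉₊) : ℕ) : ℝ))
      (fun n => (n : ℝ) * pow2e φ n) := by
  have limit : Tendsto (fun n : ℕ => (1 + 7 / n : ℝ)) atTop (nhds 1) := by
    simpa using (tendsto_const_div_atTop_nhds_zero_nat (7 : ℝ)).const_add 1
  refine limit.congr' ?_
  filter_upwards [eventually_pow2e_eq hφ, eventually_gt_atTop 0] with n hpow hn
  rw [hpow]
  push_cast
  field_simp

theorem eventually_Wsh_div_le (hWC : 0 < WC) (hWT : 0 ≤ WT) (hψ : Tendsto ψ atTop atTop)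
    (hφ : Tendsto φ atTop atTop)
    (hφψ : ∀ᶠ n in atTop, φ n ≤ (n : ℝ) / (Real.logb 2 n + Real.logb 2 (ψ n))) :
    ∀ᶠ n : ℕ in atTop, Wsh WC WT n ((n + 7) * 2 ^ (n - ⌈n / φ n⌉₊)) / (WC * 2 ^ n) ≤
      n / (n - 2 * ⌈n / φ n⌉₊ : ℕ) + (12 + 5 * (WT / WC)) / ψ n := by
  filter_upwards [eventually_two_mul_ceil_div_lt hφ, eventually_mul_le_two_pow_ceil hψ hφ hφψ,
    hψ.eventually_ge_atTop 1] with n hlt hmul hψn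
  generalize ⌈n / φ n⌉₊ = k at *
  obtain ⟨s, rfl⟩ : ∃ s, n = k + (k + s) := ⟨n - 2 * k, by omega⟩
  generalize hn : k + (k + s) = n at *
  have n_le_pow : n ≤ 2 ^ k := by
    have : (n : ℝ) ≤ 2 ^ k := (le_mul_of_one_le_right n.cast_nonneg hψn).trans hmul
    exact_mod_cast this
  have memory_le : (n * 2 ^ (k + s) : ℝ) ≤ 2 ^ n / ψ n := by
    rw [le_div_iff₀ (by positivity)]
    calc (n * 2 ^ (k + s) * ψ n : ℝ) = n * ψ n * 2 ^ (k + s) := by ring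
      _ ≤ 2 ^ k * 2 ^ (k + s) := by gcongr
      _ = 2 ^ n := by rw [← pow_add, hn]
  rw [show n - k = k + s by omega, show n - 2 * k = s by omega, div_le_iff₀ (by positivity)]
  calc Wsh WC WT n ((n + 7) * 2 ^ (k + s))
      ≤ WC * (n / s * 2 ^ n) + (12 * WC + 5 * WT) * (n * 2 ^ (k + s)) :=
        Wsh_le_of_eq_add hWC.le hWT (by omega) hn.symm n_le_pow
    _ ≤ WC * (n / s * 2 ^ n) + (12 * WC + 5 * WT) * (2 ^ n / ψ n) := by gcongr
    _ = (n / s + (12 + 5 * (WT / WC)) / ψ n) * (WC * 2 ^ n) := by field_simp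

end Asymptotics

theorem quantum_weight_upper_with_memory_general (WC WT : ℝ) (hWC : 0 < WC) (hWT : 0 ≤ WT)
    (ψ φ : ℕ → ℝ) (hψ : Tendsto ψ atTop atTop) (hφ : Tendsto φ atTop atTop)
    (hφψ : ∀ᶠ n in atTop, φ n ≤ (n : ℝ) / (Real.logb 2 n + Real.logb 2 (ψ n))) :
    ∃ q₀ : ℕ → ℕ,
      AsympEquiv (fun n => (q₀ n : ℝ)) (fun n => (n : ℝ) * pow2e φ n) ∧
      AsympLE (fun n => Wsh WC WT n (q₀ n))
        (fun n => WC * (2 : ℝ) ^ n + WT * ((n : ℝ) * pow2e φ n)) := by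
  have toffoli_term_nonneg : ∀ n : ℕ, 0 ≤ WT * (n * pow2e φ n) := fun n =>
    mul_nonneg hWT (mul_nonneg n.cast_nonneg (zpow_nonneg zero_le_two _))
  have limit : Tendsto (fun n : ℕ => n / (n - 2 * ⌈n / φ n⌉₊ : ℕ) + (12 + 5 * (WT / WC)) / ψ n)
      atTop (nhds 1) := by
    simpa using (tendsto_div_sub_two_mul_ceil hφ).add (hψ.const_div_atTop _)
  refine ⟨fun n => (n + 7) * 2 ^ (n - ⌈n / φ n⌉₊), asympEquiv_mul_pow2e hφ,
    asympLE_of_eventually_div_le (.of_forall fun n => ?_) ?_ limit⟩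
  · exact div_nonneg (Wsh_nonneg hWC.le hWT _ _)
      (add_nonneg (by positivity) (toffoli_term_nonneg n))
  · filter_upwards [eventually_Wsh_div_le hWC hWT hψ hφ hφψ] with n hle
    refine le_trans ?_ hle
    gcongr
    · exact Wsh_nonneg hWC.le hWT _ _
    · exact le_add_of_nonneg_right (toffoli_term_nonneg n)

/-- For any growing functions `ψ` and `φ` with `φ(n) ≤ n / (log₂ n + log₂ ψ(n))` for
all sufficiently large `n`, there is a sequence `q₀(n) ~ n · 2^{n - ⌈n/φ(n)⌉}` with
`W(n, q₀(n)) ≲ W^C · 2ⁿ + W^T · n · 2^{n - ⌈n/φ(n)⌉}`. -/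
theorem quantum_weight_upper_with_memory (WC WT : ℝ) (hWC : 0 < WC) (hWT : 0 < WT)
    (ψ φ : ℕ → ℝ) (hψ : Growing ψ) (hφ : Growing φ)
    (hφψ : ∀ᶠ n in atTop, φ n ≤ (n : ℝ) / (Real.logb 2 n + Real.logb 2 (ψ n))) :
    ∃ q₀ : ℕ → ℕ,
      AsympEquiv (fun n => (q₀ n : ℝ)) (fun n => (n : ℝ) * pow2e φ n) ∧
      AsympLE (fun n => Wsh WC WT n (q₀ n))
        (fun n => WC * (2 : ℝ) ^ n + WT * ((n : ℝ) * pow2e φ n)) := by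
  exact quantum_weight_upper_with_memory_general WC WT hWC hWT.le ψ φ hψ.2 hφ.2 hφψ

end Rev
end

section
/- For each n, let c_n : 𝔹^n → 𝔹^{2^n} be the transformation sending x to the tuple of all conjunctions x₁^{a₁} ∧ ⋯ ∧ x_n^{a_n} over a ∈ 𝔹^n, where x^1 = x and x^0 = ¬x. There exists a family of reversible circuits (S_n) over NOT, CNOT and C²NOT gates and a sequence q(n) such that S_n implements c_n with q(n) additional inputs and, as n → ∞, D(S_n) ~ n, L(S_n) ~ 3·2^n and q(n) ~ 3·2^n. -/
open Filter

namespace Rev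

/-- `c_n : 𝔹ⁿ → 𝔹^{2ⁿ}`: the tuple of all conjunctions `x₁^{a₁} ∧ ⋯ ∧ x_n^{a_n}`,
the index `j : Fin (2 ^ n)` encoding `a ∈ 𝔹ⁿ` via its binary digits. -/
def conjAll (n : ℕ) : (Fin n → Bool) → Fin (2 ^ n) → Bool :=
  fun x j => decide (∀ i : Fin n, x i = (j : ℕ).testBit i.val)

/-! A gate makes at most one more line depend on the first input, and only if it touches a line that
already does; so a layer of gates on disjoint sets of lines at most doubles the number of dependent
lines. All `2 ^ n` conjunctions depend on the first input, which forces depth at least `n`.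

Conversely, split the variables into halves of sizes `a = ⌊n/2⌋` and `b = ⌈n/2⌉` and compute the
conjunctions of both halves in parallel. By repeated doubling, `b` layers make `2 ^ b` copies of
each of the `2 ^ a` conjunctions of the first half and `2 ^ a` copies of each of the `2 ^ b`
conjunctions of the second, and one layer of C²NOT gates multiplies all pairs. Copying costs about
`2 * 2 ^ n` gates and multiplying `2 ^ n`, the halves contribute only `O(2 ^ (n/2))`, and the layers
add up to `n + O(log n)`. -/

section MultisetMap

variable {α β : Type*}

theorem exists_le_map_eq_of_le_map {f : α → β} {s : Multiset α} {c : Multiset β}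
    (h : c ≤ s.map f) : ∃ u ≤ s, u.map f = c := by
  induction s, c using Quotient.inductionOn₂ with
  | h l k =>
    obtain ⟨k', hk', hsub⟩ := Multiset.coe_le.1 h
    obtain ⟨l', hl', rfl⟩ := List.sublist_map_iff.1 hsub
    exact ⟨l', hl'.subperm, Multiset.coe_eq_coe.2 hk'⟩

theorem exists_subset_map_eq_of_map_eq_add [DecidableEq α] {f : α → β} {U : Finset α}
    {c s : Multiset β} (h : U.val.map f = c + s) :
    ∃ I ⊆ U, I.val.map f = c ∧ (U \ I).val.map f = s := by
  obtain ⟨u, hu, rfl⟩ := exists_le_map_eq_of_le_map (h ▸ Multiset.le_add_right c s)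
  refine ⟨⟨u, Multiset.nodup_of_le hu U.nodup⟩, Finset.val_le_iff.1 hu, rfl, ?_⟩
  rw [Finset.sdiff_val]
  refine add_left_cancel (a := u.map f) ?_
  rw [← h, ← Multiset.map_add, add_tsub_cancel_of_le hu]

theorem exists_add_eq_of_card_eq_add {s : Multiset α} {a b : ℕ} (h : s.card = a + b) :
    ∃ t u : Multiset α, s = t + u ∧ t.card = a ∧ u.card = b := by
  induction s using Quotient.inductionOn with
  | h l =>
    have hl : l.length = a + b := h
    exact ⟨l.take a, l.drop a, by simp, by simp [hl], by simp [hl]⟩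

theorem map_fst_product (s : Multiset α) (t : Multiset β) :
    (s ×ˢ t).map Prod.fst = t.card • s := by
  induction s using Multiset.induction with
  | empty => simp
  | cons a s ih => simp [ih, Multiset.nsmul_cons, Multiset.nsmul_singleton]

theorem map_snd_product (s : Multiset α) (t : Multiset β) :
    (s ×ˢ t).map Prod.snd = s.card • t := by
  induction s using Multiset.induction with
  | empty => simp
  | cons a s ih => simp [ih, add_nsmul, add_comm]

end MultisetMap

section Run

variable {N : ℕ} {X : Type*}

/-- The set `{t} ∪ I` of lines touched by the gate `TOF(I; t)`. -/
def Gate.lines (g : Gate N) : Finset (Fin N) := insert g.t g.I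

theorem Gate.target_mem_lines (g : Gate N) : g.t ∈ g.lines := Finset.mem_insert_self _ _

/-- The set of lines touched by the gates of a circuit. -/
def Circuit.lines (S : Circuit N) : Finset (Fin N) := {i | ∃ g ∈ S, i ∈ g.lines}

theorem Circuit.lines_nil : Circuit.lines ([] : Circuit N) = ∅ := by
  ext i
  simp [Circuit.lines]

theorem Circuit.lines_cons (g : Gate N) (S : Circuit N) :
    Circuit.lines (g :: S) = g.lines ∪ S.lines := by
  ext i
  simp [Circuit.lines]

theorem depthOne_cons {g : Gate N} {S : Circuit N} :
    DepthOne (g :: S) ↔ Disjoint g.lines S.lines ∧ DepthOne S := by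
  refine List.pairwise_cons.trans (and_congr_left' ⟨fun h => ?_, fun h g' hg' => ?_⟩)
  · refine Finset.disjoint_left.2 fun i hi hiS => ?_
    obtain ⟨g', hg', hi'⟩ := (Finset.mem_filter_univ i).1 hiS
    exact Finset.disjoint_left.1 (h g' hg') hi hi'
  · exact h.mono_right fun i hi => (Finset.mem_filter_univ i).2 ⟨g', hg', hi⟩

/-- The effect of a gate on a family `v` of Boolean functions, `v i` being the function carried
by line `i`. -/
noncomputable def Gate.act (g : Gate N) (v : Fin N → X → Bool) : Fin N → X → Bool :=
  Function.update v g.t (symmDiff (v g.t) (g.I.inf v))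

/-- The functions carried by the lines after running the circuit, when line `i` initially carries
`v i`. -/
def Circuit.run (S : Circuit N) (v : Fin N → X → Bool) : Fin N → X → Bool :=
  fun i x => S.eval (fun j => v j x) i

theorem Gate.apply_eq_act (g : Gate N) (v : Fin N → X → Bool) (x : X) :
    g.apply (fun i => v i x) = fun i => g.act v i x := by
  funext i
  have hinf : g.I.inf v x = decide (∀ k ∈ g.I, v k x = true) := by
    rw [Finset.inf_apply, Bool.eq_iff_iff, decide_eq_true_iff]
    exact Finset.inf_eq_top_iff (fun k => v k x) g.I
  rcases eq_or_ne i g.t with rfl | hi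
  · simp [Gate.apply, Gate.act, hinf, Pi.symmDiff_apply]
  · simp [Gate.apply, Gate.act, hi]

theorem Gate.act_of_ne (g : Gate N) (v : Fin N → X → Bool) {i : Fin N} (hi : i ≠ g.t) :
    g.act v i = v i :=
  Function.update_of_ne hi _ _

theorem Circuit.run_cons (g : Gate N) (S : Circuit N) (v : Fin N → X → Bool) :
    Circuit.run (g :: S) v = Circuit.run S (g.act v) := by
  funext i x
  exact congrFun (congrArg S.eval (g.apply_eq_act v x)) i

theorem Circuit.run_append (S T : Circuit N) (v : Fin N → X → Bool) :
    Circuit.run (S ++ T) v = T.run (S.run v) := by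
  funext i x
  simp only [Circuit.run, Circuit.eval, List.foldl_append]

theorem Circuit.run_apply_of_notMem_lines (S : Circuit N) (v : Fin N → X → Bool) {i : Fin N}
    (hi : i ∉ S.lines) : S.run v i = v i := by
  induction S generalizing v with
  | nil => rfl
  | cons g S ih =>
    obtain ⟨hg, hS⟩ := Finset.notMem_union.1 (Circuit.lines_cons g S ▸ hi)
    rw [Circuit.run_cons, ih _ hS, g.act_of_ne v (ne_of_mem_of_not_mem g.target_mem_lines hg).symm]

end Run

section Depth

variable {N : ℕ}

theorem Circuit.exists_layers_length_eq_depth (S : Circuit N) :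
    ∃ parts : List (Circuit N),
      parts.length = S.D ∧ parts.flatten = S ∧ ∀ p ∈ parts, DepthOne p := by
  refine Nat.sInf_mem (s := {d | ∃ parts : List (Circuit N),
    parts.length = d ∧ parts.flatten = S ∧ ∀ p ∈ parts, DepthOne p})
    ⟨S.length, List.map (fun g => [g]) S, List.length_map _,
      List.flatMap_singleton' S, fun p hp => ?_⟩
  obtain ⟨g, -, rfl⟩ := List.mem_map.1 hp
  exact List.pairwise_singleton _ _

theorem Circuit.depth_nil : Circuit.D ([] : Circuit N) = 0 :=
  Nat.eq_zero_of_le_zero (Nat.sInf_le ⟨[], by simp⟩)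

theorem Circuit.depth_append_le_of_depthOne {p : Circuit N} (hp : DepthOne p) (S : Circuit N) :
    Circuit.D (p ++ S) ≤ S.D + 1 := by
  obtain ⟨parts, hlen, hflat, hparts⟩ := S.exists_layers_length_eq_depth
  exact Nat.sInf_le ⟨p :: parts, by simp [hlen], by simp [hflat],
    List.forall_mem_cons.2 ⟨hp, hparts⟩⟩

end Depth

section Sensitivity

open scoped Classical in
/-- The lines whose function is not invariant under the substitution `σ`. -/
noncomputable def sensitiveLines {N : ℕ} {X : Type*} (σ : X → X) (v : Fin N → X → Bool) :
    Finset (Fin N) :=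
  {i | v i ∘ σ ≠ v i}

variable {N : ℕ} {X : Type*} {σ : X → X} {v : Fin N → X → Bool}

theorem mem_sensitiveLines {i : Fin N} : i ∈ sensitiveLines σ v ↔ v i ∘ σ ≠ v i := by
  simp only [sensitiveLines, Finset.mem_filter_univ]

theorem Gate.act_comp_eq_of_disjoint {g : Gate N} (h : Disjoint (sensitiveLines σ v) g.lines) :
    g.act v g.t ∘ σ = g.act v g.t := by
  have hinv : ∀ i ∈ g.lines, ∀ x, v i (σ x) = v i x := fun i hi x =>
    congrFun (not_not.1 (mt mem_sensitiveLines.2 (Finset.disjoint_right.1 h hi))) x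
  have hI : ∀ x, g.I.inf v (σ x) = g.I.inf v x := fun x => by
    simp only [Finset.inf_apply]
    exact Finset.inf_congr rfl fun i hi => hinv i (Finset.mem_insert_of_mem hi) x
  funext x
  simp [Gate.act, Pi.symmDiff_apply, hinv g.t g.target_mem_lines, hI]

theorem sensitiveLines_act_subset (g : Gate N) :
    sensitiveLines σ (g.act v) ⊆ insert g.t (sensitiveLines σ v) := by
  intro i hi
  rcases eq_or_ne i g.t with rfl | hne
  · exact Finset.mem_insert_self _ _
  · rw [mem_sensitiveLines, g.act_of_ne v hne] at hi
    exact Finset.mem_insert_of_mem (mem_sensitiveLines.2 hi)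

theorem card_sensitiveLines_act_le (g : Gate N) :
    (sensitiveLines σ (g.act v)).card ≤
      (sensitiveLines σ v).card + (sensitiveLines σ v ∩ g.lines).card := by
  by_cases h : Disjoint (sensitiveLines σ v) g.lines
  · refine le_add_right (Finset.card_le_card fun i hi => ?_)
    refine Finset.mem_of_mem_insert_of_ne (sensitiveLines_act_subset g hi) ?_
    rintro rfl
    exact mem_sensitiveLines.1 hi (Gate.act_comp_eq_of_disjoint h)
  · have hpos : 1 ≤ (sensitiveLines σ v ∩ g.lines).card :=
      Finset.card_pos.2 (Finset.not_disjoint_iff_nonempty_inter.1 h)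
    exact (Finset.card_le_card (sensitiveLines_act_subset g)).trans
      ((Finset.card_insert_le _ _).trans (by gcongr))

theorem sensitiveLines_act_inter (g : Gate N) {A : Finset (Fin N)} (hA : g.t ∉ A) :
    sensitiveLines σ (g.act v) ∩ A = sensitiveLines σ v ∩ A := by
  ext i
  simp only [Finset.mem_inter, mem_sensitiveLines, and_congr_left_iff]
  intro hi
  rw [g.act_of_ne v (ne_of_mem_of_not_mem hi hA)]

theorem DepthOne.card_sensitiveLines_run_le_add {p : Circuit N} (hp : DepthOne p)
    (v : Fin N → X → Bool) :
    (sensitiveLines σ (p.run v)).card ≤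
      (sensitiveLines σ v).card + (sensitiveLines σ v ∩ Circuit.lines p).card := by
  induction p generalizing v with
  | nil => exact le_self_add
  | cons g p ih =>
    obtain ⟨hgp, hp⟩ := depthOne_cons.1 hp
    have hdisj : Disjoint (sensitiveLines σ v ∩ g.lines) (sensitiveLines σ v ∩ Circuit.lines p) :=
      hgp.mono Finset.inter_subset_right Finset.inter_subset_right
    have htarget : g.t ∉ Circuit.lines p := Finset.disjoint_left.1 hgp g.target_mem_lines
    calc (sensitiveLines σ (Circuit.run (g :: p) v)).card
        ≤ (sensitiveLines σ (g.act v)).card + (sensitiveLines σ v ∩ Circuit.lines p).card := by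
          rw [Circuit.run_cons, ← sensitiveLines_act_inter g htarget]
          exact ih hp (g.act v)
      _ ≤ (sensitiveLines σ v).card + (sensitiveLines σ v ∩ g.lines).card +
            (sensitiveLines σ v ∩ Circuit.lines p).card := by
          gcongr
          exact card_sensitiveLines_act_le g
      _ = _ := by
          rw [add_assoc, ← Finset.card_union_of_disjoint hdisj, ← Finset.inter_union_distrib_left,
            Circuit.lines_cons]

theorem DepthOne.card_sensitiveLines_run_le {p : Circuit N} (hp : DepthOne p)
    (v : Fin N → X → Bool) :
    (sensitiveLines σ (p.run v)).card ≤ 2 * (sensitiveLines σ v).card :=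
  calc (sensitiveLines σ (p.run v)).card
      ≤ (sensitiveLines σ v).card + (sensitiveLines σ v ∩ Circuit.lines p).card :=
        hp.card_sensitiveLines_run_le_add v
    _ ≤ 2 * (sensitiveLines σ v).card := by
        rw [two_mul]
        gcongr
        exact Finset.inter_subset_left

theorem card_sensitiveLines_run_le_two_pow_depth_mul (S : Circuit N) (v : Fin N → X → Bool) :
    (sensitiveLines σ (S.run v)).card ≤ 2 ^ S.D * (sensitiveLines σ v).card := by
  obtain ⟨parts, hlen, hflat, hparts⟩ := S.exists_layers_length_eq_depth
  rw [← hlen, ← hflat]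
  clear hlen hflat
  induction parts generalizing v with
  | nil => exact (one_mul _).ge
  | cons p parts ih =>
    obtain ⟨hp, hparts⟩ := List.forall_mem_cons.1 hparts
    rw [List.flatten_cons, Circuit.run_append, List.length_cons, pow_succ, mul_assoc]
    exact (ih _ hparts).trans (Nat.mul_le_mul_left _ (hp.card_sensitiveLines_run_le v))

theorem sensitiveLines_pad_subset {n q : ℕ} (k : Fin n) :
    sensitiveLines (fun x : Fin n → Bool => Function.update x k (!x k))
      (fun (i : Fin (n + q)) x => pad x i) ⊆ {Fin.castAdd q k} := by
  intro i hi
  by_contra hne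
  refine mem_sensitiveLines.1 hi (funext fun x => ?_)
  by_cases hin : (i : ℕ) < n
  · have hik : (⟨i, hin⟩ : Fin n) ≠ k := by
      rintro rfl
      exact hne (Finset.mem_singleton_self i)
    simp [pad, hin, hik]
  · simp [pad, hin]

theorem Implements.le_two_pow_depth {n q m : ℕ} {S : Circuit (n + q)}
    {f : (Fin n → Bool) → Fin m → Bool} (hS : Implements S f) (k : Fin n)
    (hf : ∀ j, ∃ x, f (Function.update x k (!x k)) j ≠ f x j) : m ≤ 2 ^ S.D := by
  obtain ⟨hm, π, hπ⟩ := hS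
  let σ : (Fin n → Bool) → Fin n → Bool := fun x => Function.update x k (!x k)
  let v : Fin (n + q) → (Fin n → Bool) → Bool := fun i x => pad x i
  have hinput : (sensitiveLines σ v).card ≤ 1 :=
    Finset.card_le_card (sensitiveLines_pad_subset k)
  have houtput : ∀ j : Fin m, π (Fin.castLE hm j) ∈ sensitiveLines σ (S.run v) := fun j => by
    obtain ⟨x, hx⟩ := hf j
    refine mem_sensitiveLines.2 fun h => hx ?_
    have hrun : ∀ y, S.run v (π (Fin.castLE hm j)) y = f y j := fun y => hπ y j _
    rw [← hrun, ← hrun]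
    exact congrFun h x
  calc m = (Finset.univ : Finset (Fin m)).card := (Finset.card_fin m).symm
    _ ≤ (sensitiveLines σ (S.run v)).card :=
        Finset.card_le_card_of_injOn _ (fun j _ => houtput j)
          (π.injective.comp (Fin.castLE_injective hm)).injOn
    _ ≤ 2 ^ S.D * (sensitiveLines σ v).card := card_sensitiveLines_run_le_two_pow_depth_mul S v
    _ ≤ 2 ^ S.D := mul_le_of_le_one_right (Nat.zero_le _) hinput

end Sensitivity

section Program

variable {X : Type*}

/-- `Layer g s t`: `g` gates acting on pairwise disjoint sets of lines turn lines carrying the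
multiset `s` of functions into lines carrying `t`. Recording only the multiset of functions makes
the names of the lines irrelevant. -/
inductive Layer : ℕ → Multiset (X → Bool) → Multiset (X → Bool) → Prop
  | idle (s : Multiset (X → Bool)) : Layer 0 s s
  | gate (f : X → Bool) {c : Multiset (X → Bool)} (hc : c.card ≤ 2) {g : ℕ}
      {s t : Multiset (X → Bool)} (h : Layer g s t) :
      Layer (g + 1) (f ::ₘ (c + s)) (symmDiff f c.inf ::ₘ (c + t))

/-- `Program d g s t`: a sequence of `d` layers with `g` gates in total turns lines carrying the
multiset `s` of functions into lines carrying `t`. -/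
inductive Program : ℕ → ℕ → Multiset (X → Bool) → Multiset (X → Bool) → Prop
  | nil (s : Multiset (X → Bool)) : Program 0 0 s s
  | cons {d g g' : ℕ} {s t u : Multiset (X → Bool)} (layer : Layer g s t)
      (rest : Program d g' t u) : Program (d + 1) (g + g') s u

variable {d d' g g' : ℕ} {s t u s' t' : Multiset (X → Bool)}

theorem Layer.add_left (h : Layer g s t) (r : Multiset (X → Bool)) :
    Layer g (r + s) (r + t) := by
  induction h with
  | idle s => exact .idle _
  | gate f hc _ ih => simpa only [Multiset.add_cons, add_left_comm r] using ih.gate f hc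

theorem Layer.add (h : Layer g s t) (h' : Layer g' s' t') :
    Layer (g + g') (s + s') (t + t') := by
  induction h with
  | idle s => simpa only [zero_add] using h'.add_left s
  | gate f hc _ ih =>
    simpa only [Multiset.cons_add, add_assoc, add_right_comm _ 1] using ih.gate f hc

theorem Layer.conjunctions (p : Multiset (Multiset (X → Bool))) (hp : ∀ c ∈ p, c.card ≤ 2) :
    Layer p.card (p.sum + Multiset.replicate p.card ⊥) (p.sum + p.map Multiset.inf) := by
  induction p using Multiset.induction with
  | empty => exact .idle _
  | cons c p ih =>
    obtain ⟨hc, hp⟩ := Multiset.forall_mem_cons.1 hp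
    simpa only [Multiset.card_cons, Multiset.sum_cons, Multiset.replicate_succ, Multiset.map_cons,
      Multiset.add_cons, add_assoc, bot_symmDiff] using (ih hp).gate ⊥ hc

theorem Program.trans (h : Program d g s t) (h' : Program d' g' t u) :
    Program (d + d') (g + g') s u := by
  induction h with
  | nil s => simpa only [zero_add] using h'
  | cons layer _ ih => simpa only [add_assoc, add_right_comm _ 1] using Program.cons layer (ih h')

theorem Program.of_layer (h : Layer g s t) : Program 1 g s t :=
  .cons h (.nil t)

theorem Program.idle (d : ℕ) (s : Multiset (X → Bool)) : Program d 0 s s := by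
  induction d with
  | zero => exact .nil s
  | succ d ih => exact .cons (.idle s) ih

theorem Program.add (h : Program d g s t) (h' : Program d g' s' t') :
    Program d (g + g') (s + s') (t + t') := by
  induction h generalizing g' s' with
  | nil s =>
    cases h'
    exact .nil _
  | cons layer _ ih =>
    cases h' with
    | cons layer' rest' =>
      rw [add_add_add_comm]
      exact .cons (layer.add layer') (ih rest')

theorem Program.mono (h : Program d g s t) (hd : d ≤ d') : Program d' g s t := by
  simpa only [Nat.add_sub_cancel' hd, add_zero] using h.trans (.idle (d' - d) t)

theorem Program.add_right (h : Program d g s t) (r : Multiset (X → Bool)) :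
    Program d g (s + r) (t + r) :=
  h.add (.idle d r)

/-- `Computes d g s t`: with `g` additional lines initialised to `0`, a program of depth `d` with
`g` gates turns lines carrying `s` into lines carrying `t` and some unspecified garbage. -/
def Computes (d g : ℕ) (s t : Multiset (X → Bool)) : Prop :=
  ∃ garbage, Program d g (s + Multiset.replicate g ⊥) (t + garbage)

theorem Computes.refl (s : Multiset (X → Bool)) : Computes 0 0 s s :=
  ⟨0, .nil _⟩

theorem Computes.trans (h : Computes d g s t) (h' : Computes d' g' t u) :
    Computes (d + d') (g + g') s u := by
  obtain ⟨j, h⟩ := h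
  obtain ⟨j', h'⟩ := h'
  refine ⟨j' + j, ?_⟩
  have first := h.add_right (Multiset.replicate g' ⊥)
  have second := h'.add_right j
  rw [add_right_comm] at second
  simpa only [Multiset.replicate_add, add_assoc] using first.trans second

theorem Computes.add (h : Computes d g s t) (h' : Computes d g' s' t') :
    Computes d (g + g') (s + s') (t + t') := by
  obtain ⟨j, h⟩ := h
  obtain ⟨j', h'⟩ := h'
  refine ⟨j + j', ?_⟩
  rw [Multiset.replicate_add, add_add_add_comm s, add_add_add_comm t]
  exact h.add h'

theorem Computes.mono (h : Computes d g s t) (hd : d ≤ d') : Computes d' g s t :=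
  h.imp fun _ hj => hj.mono hd

theorem Computes.of_add_left (h : Computes d g s (t + u)) : Computes d g s u := by
  obtain ⟨j, h⟩ := h
  exact ⟨t + j, by rwa [add_left_comm, ← add_assoc]⟩

theorem Computes.conjunctions (p : Multiset (Multiset (X → Bool))) (hp : ∀ c ∈ p, c.card ≤ 2) :
    Computes 1 p.card p.sum (p.sum + p.map Multiset.inf) :=
  ⟨0, .of_layer (by simpa only [add_zero] using Layer.conjunctions p hp)⟩

theorem Computes.double (s : Multiset (X → Bool)) : Computes 1 s.card s (s + s) := by
  simpa using Computes.conjunctions (s.map fun f => {f}) (by simp)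

theorem Computes.copy (k : ℕ) (s : Multiset (X → Bool)) :
    Computes k (s.card * (2 ^ k - 1)) s (2 ^ k • s) := by
  induction k with
  | zero => simpa only [pow_zero, tsub_self, mul_zero, one_nsmul] using Computes.refl s
  | succ k ih =>
    have hgates : s.card * (2 ^ (k + 1) - 1) = s.card * (2 ^ k - 1) + (2 ^ k • s).card := by
      rw [Multiset.card_nsmul, mul_comm (2 ^ k), ← mul_add]
      have := Nat.one_le_two_pow (n := k)
      congr 1
      omega
    rw [hgates, pow_succ', two_mul, add_nsmul]
    exact ih.trans (.double _)

theorem Computes.inf_product_of_copies (s t : Multiset (X → Bool)) :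
    Computes 1 (s.card * t.card) (t.card • s + s.card • t)
      ((s ×ˢ t).map fun a => a.1 ⊓ a.2) := by
  have pairs := Computes.conjunctions ((s ×ˢ t).map fun a => {a.1} + {a.2}) fun c hc => by
    obtain ⟨a, -, rfl⟩ := Multiset.mem_map.1 hc
    rfl
  have hsum : ((s ×ˢ t).map fun a => {a.1} + {a.2}).sum = t.card • s + s.card • t := by
    rw [Multiset.sum_map_add, ← map_fst_product, ← map_snd_product]
    exact congrArg₂ (· + ·) (Multiset.bind_singleton _ _) (Multiset.bind_singleton _ _)
  have hinf : ∀ f h : X → Bool, ({f} + {h} : Multiset (X → Bool)).inf = f ⊓ h := by simp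
  simpa only [hsum, hinf, Multiset.card_map, Multiset.card_product, Multiset.map_map,
    Function.comp_def] using pairs.of_add_left

theorem Computes.inf_product {a b : ℕ} (hab : a ≤ b) (hs : s.card = 2 ^ a) (ht : t.card = 2 ^ b) :
    Computes (b + 1) (2 ^ a * (2 ^ b - 1) + 2 ^ b * (2 ^ a - 1) + 2 ^ (a + b)) (s + t)
      ((s ×ˢ t).map fun a => a.1 ⊓ a.2) := by
  have copies := (Computes.copy b s).add ((Computes.copy a t).mono hab)
  have products := Computes.inf_product_of_copies s t
  rw [hs, ht, ← pow_add] at products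
  rw [hs, ht] at copies
  exact copies.trans products

end Program

section Minterms

variable {X : Type*}

/-- The `2 ^ k` conjunctions of literals obtained by choosing one of `f`, `fᶜ` for each member `f`
of a multiset of `k` functions. -/
noncomputable def minterms (s : Multiset (X → Bool)) : Multiset (X → Bool) :=
  (Multiset.Sections (s.map fun f => {f, fᶜ})).map Multiset.inf

theorem card_minterms (s : Multiset (X → Bool)) : (minterms s).card = 2 ^ s.card := by
  simp [minterms, Multiset.card_sections]

theorem minterms_zero : minterms (0 : Multiset (X → Bool)) = {⊤} := by
  simp [minterms]

theorem minterms_singleton (f : X → Bool) : minterms {f} = {f, fᶜ} := by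
  simp [minterms, ← Multiset.cons_zero]

theorem minterms_add (s t : Multiset (X → Bool)) :
    minterms (s + t) = (minterms s ×ˢ minterms t).map fun a => a.1 ⊓ a.2 := by
  simp [minterms, Multiset.sections_add, Multiset.map_bind, Multiset.bind_map, SProd.sprod,
    Multiset.product]

theorem inf_ite_compl_mem_minterms {ι : Type*} (U : Finset ι) (f : ι → X → Bool) (a : ι → Bool) :
    (U.inf fun i => if a i then f i else (f i)ᶜ) ∈ minterms (U.val.map f) := by
  refine Multiset.mem_map.2 ⟨U.val.map fun i => if a i then f i else (f i)ᶜ, ?_, rfl⟩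
  rw [Multiset.mem_sections, Multiset.map_map, Multiset.rel_map]
  refine Multiset.rel_refl_of_refl_on fun i _ => ?_
  by_cases ha : a i <;> simp [ha]

theorem Computes.minterms_zero : Computes 1 1 0 (minterms (0 : Multiset (X → Bool))) := by
  simpa [Rev.minterms_zero] using Computes.conjunctions {(0 : Multiset (X → Bool))} (by simp)

theorem Computes.minterms_singleton (f : X → Bool) : Computes 2 2 {f} (minterms {f}) := by
  have negate : Computes 1 1 {f, f} {f, fᶜ} := by
    refine ⟨{⊥}, .of_layer ?_⟩
    convert Layer.gate f (c := 0) (by simp) (.idle {f, ⊥}) using 1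
    · rfl
    · rw [Multiset.inf_zero, symmDiff_top, zero_add, Multiset.pair_comm]
      rfl
  rw [Rev.minterms_singleton]
  exact (Computes.double {f}).trans negate

/-- The number of gates obtained by splitting `n` functions into halves of sizes `a = ⌊n / 2⌋` and
`b = ⌈n / 2⌉`: after computing the minterms of both halves, `2 ^ a * (2 ^ b - 1)` and
`2 ^ b * (2 ^ a - 1)` gates copy them and `2 ^ n` gates multiply them. -/
def mintermGates : ℕ → ℕ
  | 0 => 1
  | 1 => 2
  | n + 2 =>
    mintermGates ((n + 2) / 2) + mintermGates ((n + 3) / 2) +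
      (2 ^ ((n + 2) / 2) * (2 ^ ((n + 3) / 2) - 1) +
        2 ^ ((n + 3) / 2) * (2 ^ ((n + 2) / 2) - 1) + 2 ^ (n + 2))

/-- A bound for the depth of the halving construction: halving `n` costs `⌈n / 2⌉ + 1` layers, and
`⌈n / 2⌉ + ⌈n / 4⌉ + ⋯` exceeds `n` by at most the number of halvings. -/
def mintermDepth (n : ℕ) : ℕ := n + 2 * Nat.clog 2 n + 1

theorem mintermDepth_mono : Monotone mintermDepth := fun _ _ h => by
  have := Nat.clog_mono_right 2 h
  unfold mintermDepth
  omega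

theorem mintermDepth_half_add_le {n : ℕ} (hn : 2 ≤ n) :
    mintermDepth ((n + 1) / 2) + ((n + 1) / 2 + 1) ≤ mintermDepth n := by
  have hclog : Nat.clog 2 n = Nat.clog 2 ((n + 1) / 2) + 1 :=
    Nat.clog_of_two_le one_lt_two hn
  unfold mintermDepth
  omega

theorem computes_minterms (s : Multiset (X → Bool)) :
    Computes (mintermDepth s.card) (mintermGates s.card) s (minterms s) := by
  obtain ⟨n, hn⟩ : ∃ n, s.card = n := ⟨_, rfl⟩
  rw [hn]
  induction n using mintermGates.induct generalizing s with
  | case1 =>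
    obtain rfl := Multiset.card_eq_zero.1 hn
    rw [mintermGates]
    exact Computes.minterms_zero.mono (by simp [mintermDepth])
  | case2 =>
    obtain ⟨f, rfl⟩ := Multiset.card_eq_one.1 hn
    rw [mintermGates]
    exact (Computes.minterms_singleton f).mono (by simp [mintermDepth])
  | case3 n ihfloor ihceil =>
    have hsplit : n + 2 = (n + 2) / 2 + (n + 3) / 2 := by omega
    have hle : (n + 2) / 2 ≤ (n + 3) / 2 := by omega
    obtain ⟨t, u, rfl, ht, hu⟩ := exists_add_eq_of_card_eq_add (hn.trans hsplit)
    have halves := ((ihfloor t ht).mono (mintermDepth_mono hle)).add (ihceil u hu)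
    have products := Computes.inf_product hle ((card_minterms t).trans (by rw [ht]))
      ((card_minterms u).trans (by rw [hu]))
    rw [← hsplit] at products
    rw [minterms_add, mintermGates]
    exact (halves.trans products).mono (mintermDepth_half_add_le le_add_self)

theorem two_pow_le_mintermGates (n : ℕ) : 2 ^ n ≤ mintermGates n := by
  induction n using mintermGates.induct with
  | case1 => simp [mintermGates]
  | case2 => simp [mintermGates]
  | case3 n _ _ =>
    rw [mintermGates]
    exact le_add_left le_add_self

theorem two_pow_mul_two_pow_sub_one_add (a b : ℕ) :
    2 ^ a * (2 ^ b - 1) + 2 ^ a = 2 ^ (a + b) := by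
  rw [← Nat.mul_succ, Nat.succ_eq_add_one, Nat.sub_add_cancel Nat.one_le_two_pow, pow_add]

theorem mintermGates_add_eq {n : ℕ} (hn : 2 ≤ n) :
    mintermGates n + (2 ^ (n / 2) + 2 ^ ((n + 1) / 2)) =
      mintermGates (n / 2) + mintermGates ((n + 1) / 2) + 3 * 2 ^ n := by
  obtain ⟨m, rfl⟩ := Nat.exists_eq_add_of_le' hn
  have hfloor := two_pow_mul_two_pow_sub_one_add ((m + 2) / 2) ((m + 3) / 2)
  have hceil := two_pow_mul_two_pow_sub_one_add ((m + 3) / 2) ((m + 2) / 2)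
  rw [show (m + 2) / 2 + (m + 3) / 2 = m + 2 by omega] at hfloor
  rw [show (m + 3) / 2 + (m + 2) / 2 = m + 2 by omega] at hceil
  rw [mintermGates]
  linarith

theorem mintermGates_add_eight_le {n : ℕ} (hn : 1 ≤ n) : mintermGates n + 8 ≤ 5 * 2 ^ n := by
  induction n using Nat.strong_induction_on with
  | _ n ih =>
  obtain rfl | hn2 := hn.eq_or_lt
  · simp [mintermGates]
  have hfloor := ih (n / 2) (by omega) (by omega)
  have hceil := ih ((n + 1) / 2) (by omega) (by omega)
  have hrec := mintermGates_add_eq hn2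
  have hpow : 2 ^ n = 2 ^ (n / 2) * 2 ^ ((n + 1) / 2) := by
    rw [← pow_add, show n / 2 + (n + 1) / 2 = n by omega]
  have hfloor2 : 2 ≤ 2 ^ (n / 2) := Nat.le_self_pow (by omega) 2
  have hceil2 : 2 ≤ 2 ^ ((n + 1) / 2) := Nat.le_self_pow (by omega) 2
  -- Up to linear terms this is `(2 ^ ⌊n/2⌋ - 2) * (2 ^ ⌈n/2⌉ - 2) ≥ 0`.
  nlinarith

theorem three_mul_two_pow_le_mintermGates {n : ℕ} (hn : 2 ≤ n) : 3 * 2 ^ n ≤ mintermGates n := by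
  have hrec := mintermGates_add_eq hn
  have := two_pow_le_mintermGates (n / 2)
  have := two_pow_le_mintermGates ((n + 1) / 2)
  omega

theorem mintermGates_le {n : ℕ} (hn : 2 ≤ n) :
    mintermGates n ≤ 3 * 2 ^ n + 8 * 2 ^ ((n + 1) / 2) := by
  have hrec := mintermGates_add_eq hn
  have hfloor := mintermGates_add_eight_le (n := n / 2) (by omega)
  have hceil := mintermGates_add_eight_le (n := (n + 1) / 2) (by omega)
  have hpow : 2 ^ (n / 2) ≤ 2 ^ ((n + 1) / 2) := Nat.pow_le_pow_right two_pos (by omega)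
  omega

end Minterms

section Soundness

variable {N d g : ℕ} {X : Type*} {s t : Multiset (X → Bool)}

theorem Gate.val_eq_cons_of_lines_subset (γ : Gate N) {U : Finset (Fin N)} (hU : γ.lines ⊆ U) :
    U.val = γ.t ::ₘ (γ.I.val + (U \ γ.lines).val) := by
  rw [← Multiset.cons_add, ← Finset.insert_val_of_notMem γ.t_not_mem, Finset.sdiff_val]
  exact (add_tsub_cancel_of_le (Finset.val_le_iff.2 hU)).symm

theorem exists_gate_of_map_eq_cons {U : Finset (Fin N)} {v : Fin N → X → Bool} {f : X → Bool}
    {c : Multiset (X → Bool)} (hc : c.card ≤ 2) (hv : U.val.map v = f ::ₘ (c + s)) :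
    ∃ γ : Gate N, γ.lines ⊆ U ∧ v γ.t = f ∧ γ.I.val.map v = c ∧
      (U \ γ.lines).val.map v = s := by
  obtain ⟨T, hTU, hT, hrest⟩ := exists_subset_map_eq_of_map_eq_add (c := {f}) hv
  obtain ⟨I, hIU, hI, hW⟩ := exists_subset_map_eq_of_map_eq_add hrest
  obtain ⟨t, rfl⟩ : ∃ t, T = {t} := by
    rw [← Finset.card_eq_one, ← Finset.card_val, ← Multiset.card_map v, hT, Multiset.card_singleton]
  obtain ⟨hIU, htI⟩ := Finset.subset_sdiff.1 hIU
  refine ⟨⟨I, t, ?_, Finset.disjoint_singleton_right.1 htI⟩, ?_, ?_, hI, ?_⟩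
  · rwa [← Finset.card_val, ← Multiset.card_map v, hI]
  · exact Finset.insert_subset (Finset.singleton_subset_iff.1 hTU) hIU
  · simpa using hT
  · rwa [sdiff_sdiff_left] at hW

theorem Gate.map_eq_cons_of_eq_act (γ : Gate N) {U : Finset (Fin N)} (hU : γ.lines ⊆ U)
    (v w : Fin N → X → Bool) (hw : ∀ i ∈ γ.lines, w i = γ.act v i) :
    U.val.map w = symmDiff (v γ.t) (γ.I.val.map v).inf ::ₘ
      (γ.I.val.map v + (U \ γ.lines).val.map w) := by
  have hI : γ.I.val.map w = γ.I.val.map v := Multiset.map_congr rfl fun i hi => by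
    rw [hw i (Finset.mem_insert_of_mem hi), γ.act_of_ne v (ne_of_mem_of_not_mem hi γ.t_not_mem)]
  rw [γ.val_eq_cons_of_lines_subset hU, Multiset.map_cons, Multiset.map_add, hI,
    hw _ γ.target_mem_lines, Gate.act, Function.update_self, Finset.inf_def]

theorem Layer.exists_circuit (h : Layer g s t) (U : Finset (Fin N)) (v : Fin N → X → Bool)
    (hv : U.val.map v = s) :
    ∃ p : Circuit N, p.L = g ∧ DepthOne p ∧ p.lines ⊆ U ∧ U.val.map (p.run v) = t := by
  induction h generalizing U v with
  | idle s => exact ⟨[], rfl, .nil, by simp [Circuit.lines_nil], hv⟩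
  | gate f hc _ ih =>
    obtain ⟨γ, hγU, rfl, rfl, hrest⟩ := exists_gate_of_map_eq_cons hc hv
    have hrest' : (U \ γ.lines).val.map (γ.act v) = (U \ γ.lines).val.map v :=
      Multiset.map_congr rfl fun i hi => γ.act_of_ne v
        (ne_of_mem_of_not_mem γ.target_mem_lines (Finset.mem_sdiff.1 hi).2).symm
    obtain ⟨p, rfl, hp, hpU, rfl⟩ := ih (U \ γ.lines) (γ.act v) (hrest'.trans hrest)
    obtain ⟨hpU, hpγ⟩ := Finset.subset_sdiff.1 hpU
    refine ⟨γ :: p, rfl, depthOne_cons.2 ⟨hpγ.symm, hp⟩, ?_, ?_⟩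
    · rw [Circuit.lines_cons]
      exact Finset.union_subset hγU hpU
    · rw [Circuit.run_cons]
      exact γ.map_eq_cons_of_eq_act hγU v _ fun i hi =>
        p.run_apply_of_notMem_lines _ (Finset.disjoint_right.1 hpγ hi)

theorem Program.exists_circuit (h : Program d g s t) (v : Fin N → X → Bool)
    (hv : Finset.univ.val.map v = s) :
    ∃ S : Circuit N, S.L = g ∧ S.D ≤ d ∧ Finset.univ.val.map (S.run v) = t := by
  induction h generalizing v with
  | nil s => exact ⟨[], rfl, Circuit.depth_nil.le, hv⟩
  | cons layer _ ih =>
    obtain ⟨p, hpL, hp, -, hpv⟩ := layer.exists_circuit Finset.univ v hv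
    obtain ⟨S, hSL, hSD, hSv⟩ := ih (p.run v) hpv
    refine ⟨p ++ S, ?_, ?_, ?_⟩
    · rw [← hpL, ← hSL]
      exact List.length_append
    · exact (Circuit.depth_append_le_of_depthOne hp S).trans (Nat.add_le_add_right hSD 1)
    · rwa [Circuit.run_append]

theorem map_pad_eq_add_replicate (n q : ℕ) :
    (Finset.univ : Finset (Fin (n + q))).val.map (fun i (x : Fin n → Bool) => pad x i) =
      (Finset.univ : Finset (Fin n)).val.map (fun i x => x i) + Multiset.replicate q ⊥ := by
  rw [Fin.univ_val_map, Fin.univ_val_map, List.ofFn_add, ← Multiset.coe_add,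
    ← Multiset.coe_replicate, ← List.ofFn_const]
  congr 3 <;> funext i x
  · exact dif_pos i.2
  · exact dif_neg (Nat.not_lt.2 (Nat.le_add_right n i))

theorem Computes.exists_circuit {n : ℕ} {t : Multiset ((Fin n → Bool) → Bool)}
    (h : Computes d g ((Finset.univ : Finset (Fin n)).val.map fun i x => x i) t) :
    ∃ S : Circuit (n + g), S.L = g ∧ S.D ≤ d ∧ ∀ f ∈ t, ∃ i, ∀ x, S.eval (pad x) i = f x := by
  obtain ⟨garbage, program⟩ := h
  obtain ⟨S, hL, hD, hS⟩ := program.exists_circuit _ (map_pad_eq_add_replicate n g)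
  refine ⟨S, hL, hD, fun f hf => ?_⟩
  have hmem : f ∈ Finset.univ.val.map (S.run fun i x => pad x i) :=
    hS ▸ Multiset.mem_add.2 (.inl hf)
  obtain ⟨i, -, rfl⟩ := Multiset.mem_map.1 hmem
  exact ⟨i, fun x => rfl⟩

theorem implements_of_forall_exists_line {n q m : ℕ} {S : Circuit (n + q)}
    {f : (Fin n → Bool) → Fin m → Bool} (hf : Function.Injective fun j x => f x j)
    (hS : ∀ j, ∃ i, ∀ x, S.eval (pad x) i = f x j) : Implements S f := by
  choose line hline using hS
  have hinj : Function.Injective line := fun j k hjk => hf <| funext fun x => by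
    exact (hline j x).symm.trans (hjk ▸ hline k x)
  have hm : m ≤ n + q := by simpa using Fintype.card_le_of_injective line hinj
  obtain ⟨π, hπ⟩ := Equiv.Perm.exists_extending_pair (Fin.castLE hm) line
    (Fin.castLE_injective hm) hinj
  refine ⟨hm, π, fun x j _ => ?_⟩
  rw [← hline j x, ← hπ j]
  rfl

end Soundness

section ConjAll

variable {n : ℕ}

theorem conjAll_eq_true_iff {x : Fin n → Bool} {k : Fin (2 ^ n)} :
    conjAll n x k = true ↔ x = fun i : Fin n => (k : ℕ).testBit i := by
  rw [conjAll, decide_eq_true_iff, funext_iff]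

theorem conjAll_injective : Function.Injective fun (k : Fin (2 ^ n)) x => conjAll n x k := by
  intro k l hkl
  have hbits : (fun i : Fin n => (k : ℕ).testBit i) = fun i : Fin n => (l : ℕ).testBit i := by
    rw [← conjAll_eq_true_iff]
    exact (congrFun hkl _).symm.trans (conjAll_eq_true_iff.2 rfl)
  refine Fin.ext (Nat.eq_of_testBit_eq fun i => ?_)
  rcases lt_or_ge i n with hi | hi
  · exact congrFun hbits ⟨i, hi⟩
  · have hpow : 2 ^ n ≤ 2 ^ i := Nat.pow_le_pow_right two_pos hi
    rw [Nat.testBit_lt_two_pow (k.2.trans_le hpow), Nat.testBit_lt_two_pow (l.2.trans_le hpow)]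

theorem conjAll_mem_minterms (k : Fin (2 ^ n)) :
    (fun x => conjAll n x k) ∈
      minterms ((Finset.univ : Finset (Fin n)).val.map fun i x => x i) := by
  convert inf_ite_compl_mem_minterms Finset.univ (fun (i : Fin n) (x : Fin n → Bool) => x i)
    (fun i => (k : ℕ).testBit i) using 1
  funext x
  rw [Finset.inf_apply, Bool.eq_iff_iff, conjAll_eq_true_iff, funext_iff]
  refine Iff.trans (forall_congr' fun i => ?_) (Finset.inf_eq_top_iff _ _).symm
  cases (k : ℕ).testBit i <;> simp

theorem le_depth_of_implements_conjAll {q : ℕ} {S : Circuit (n + q)}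
    (hS : Implements S (conjAll n)) : n ≤ S.D := by
  rcases Nat.eq_zero_or_pos n with rfl | hn
  · exact Nat.zero_le _
  refine (Nat.pow_le_pow_iff_right one_lt_two).1 (hS.le_two_pow_depth ⟨0, hn⟩ fun k => ?_)
  refine ⟨fun i => (k : ℕ).testBit i, fun h => ?_⟩
  have hflip := conjAll_eq_true_iff.1 (h.trans (conjAll_eq_true_iff.2 rfl))
  simpa using congrFun hflip ⟨0, hn⟩

theorem exists_circuit_implements_conjAll (n : ℕ) :
    ∃ S : Circuit (n + mintermGates n),
      Implements S (conjAll n) ∧ S.D ≤ mintermDepth n ∧ S.L = mintermGates n := by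
  have h := computes_minterms
    ((Finset.univ : Finset (Fin n)).val.map fun i (x : Fin n → Bool) => x i)
  rw [Multiset.card_map, Finset.card_val, Finset.card_fin] at h
  obtain ⟨S, hL, hD, hS⟩ := h.exists_circuit
  exact ⟨S, implements_of_forall_exists_line conjAll_injective
    fun k => hS _ (conjAll_mem_minterms k), hD, hL⟩

end ConjAll

section Asymptotics

theorem asympEquiv_of_le_of_le_add {a b e : ℕ → ℝ} (hb : ∀ᶠ n in atTop, 0 < b n)
    (hlower : ∀ᶠ n in atTop, b n ≤ a n) (hupper : ∀ᶠ n in atTop, a n ≤ b n + e n)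
    (he : Tendsto (fun n => e n / b n) atTop (nhds 0)) : AsympEquiv a b := by
  have hlim : Tendsto (fun n => 1 + e n / b n) atTop (nhds 1) := by
    simpa only [add_zero] using he.const_add 1
  refine tendsto_of_tendsto_of_tendsto_of_le_of_le' tendsto_const_nhds hlim ?_ ?_
  · filter_upwards [hb, hlower] with n hbn hn
    exact (one_le_div hbn).2 hn
  · filter_upwards [hb, hupper] with n hbn hn
    rw [one_add_div hbn.ne']
    gcongr

theorem asympEquiv_mintermGates :
    AsympEquiv (fun n => (mintermGates n : ℝ)) (fun n => 3 * (2 : ℝ) ^ n) := by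
  have hlim : Tendsto (fun n : ℕ => 8 * (2 : ℝ) ^ ((n + 1) / 2) / (3 * 2 ^ n)) atTop (nhds 0) := by
    have hhalf : Tendsto (fun n : ℕ => (8 / 3 : ℝ) * (1 / 2) ^ (n / 2)) atTop (nhds 0) := by
      have hgeom : Tendsto (fun n : ℕ => (1 / 2 : ℝ) ^ n) atTop (nhds 0) :=
        tendsto_pow_atTop_nhds_zero_of_lt_one (by norm_num) (by norm_num)
      simpa using (hgeom.comp (Nat.tendsto_div_const_atTop two_ne_zero)).const_mul (8 / 3 : ℝ)
    refine hhalf.congr fun n => ?_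
    have hpow : (2 : ℝ) ^ n = 2 ^ (n / 2) * 2 ^ ((n + 1) / 2) := by
      rw [← pow_add, show n / 2 + (n + 1) / 2 = n by omega]
    rw [hpow]
    field_simp
    simp
  refine asympEquiv_of_le_of_le_add (.of_forall fun n => by positivity) ?_ ?_ hlim
  · filter_upwards [eventually_ge_atTop 2] with n hn
    exact_mod_cast three_mul_two_pow_le_mintermGates hn
  · filter_upwards [eventually_ge_atTop 2] with n hn
    exact_mod_cast mintermGates_le hn

theorem tendsto_clog_div_atTop_nhds_zero :
    Tendsto (fun n : ℕ => (Nat.clog 2 n : ℝ) / n) atTop (nhds 0) := by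
  have hlog : Tendsto (fun n : ℕ => Real.log n / n) atTop (nhds 0) :=
    Real.isLittleO_log_id_atTop.tendsto_div_nhds_zero.comp tendsto_natCast_atTop_atTop
  have hbound : Tendsto (fun n : ℕ => Real.log n / n / Real.log 2 + 1 / n) atTop (nhds 0) := by
    simpa using (hlog.div_const (Real.log 2)).add (tendsto_one_div_atTop_nhds_zero_nat (𝕜 := ℝ))
  refine squeeze_zero (fun n => by positivity) (fun n => ?_) hbound
  have hclog : (Nat.clog 2 n : ℝ) ≤ Real.log n / Real.log 2 + 1 := by
    rw [← Real.natCeil_logb_natCast 2 n]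
    refine (Nat.ceil_lt_add_one (div_nonneg ?_ ?_)).le
    · exact Real.log_natCast_nonneg n
    · exact Real.log_natCast_nonneg 2
  calc (Nat.clog 2 n : ℝ) / n ≤ (Real.log n / Real.log 2 + 1) / n := by gcongr
    _ = Real.log n / n / Real.log 2 + 1 / n := by rw [add_div, div_right_comm]

theorem asympEquiv_of_le_of_le_mintermDepth {a : ℕ → ℕ} (hlower : ∀ n, n ≤ a n)
    (hupper : ∀ n, a n ≤ mintermDepth n) :
    AsympEquiv (fun n => (a n : ℝ)) (fun n => (n : ℝ)) := by
  have hlim : Tendsto (fun n : ℕ => (2 * Nat.clog 2 n + 1 : ℝ) / n) atTop (nhds 0) := by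
    simpa [add_div, mul_div_assoc] using (tendsto_clog_div_atTop_nhds_zero.const_mul 2).add
      (tendsto_one_div_atTop_nhds_zero_nat (𝕜 := ℝ))
  refine asympEquiv_of_le_of_le_add ?_ (.of_forall fun n => by exact_mod_cast hlower n)
    (.of_forall fun n => ?_) hlim
  · filter_upwards [eventually_gt_atTop 0] with n hn
    exact_mod_cast hn
  · exact_mod_cast hupper n

end Asymptotics

/-- All `2ⁿ` conjunctions of `n` variables can be implemented by reversible circuits
`S_n` with `q n` additional inputs, where `D(S_n) ~ n`, `L(S_n) ~ 3 · 2ⁿ` and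
`q n ~ 3 · 2ⁿ`. -/
theorem conjunctions_depth :
    ∃ (q : ℕ → ℕ) (S : ∀ n, Circuit (n + q n)),
      (∀ n, Implements (S n) (conjAll n)) ∧
      AsympEquiv (fun n => ((S n).D : ℝ)) (fun n => (n : ℝ)) ∧
      AsympEquiv (fun n => ((S n).L : ℝ)) (fun n => 3 * (2 : ℝ) ^ n) ∧
      AsympEquiv (fun n => (q n : ℝ)) (fun n => 3 * (2 : ℝ) ^ n) := by
  choose S hS hD hL using exists_circuit_implements_conjAll
  refine ⟨mintermGates, S, hS, ?_, ?_, asympEquiv_mintermGates⟩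
  · exact asympEquiv_of_le_of_le_mintermDepth (fun n => le_depth_of_implements_conjAll (hS n)) hD
  · simpa only [hL] using asympEquiv_mintermGates

end Rev
end
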